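/- arXiv:1407.5041 — 2 statements merged into one kernel-verified Lean document; each statement's English description precedes it below -/
import Mathlib

section
/- Let K be a field and K(x) a purely transcendental extension of transcendence degree 1. Then the restriction map res_{K(x)/K} : Br(K) → Br(K(x)) is injective. -/
open scoped TensorProduct
universe u

/-- A finite-dimensional `F`-algebra is *split* if it is a matrix algebra over `F`. -/
def IsSplit (F : Type u) [Field F] (A : Type u) [Ring A] [Algebra F A] : Prop :=
  ∃ n : ℕ, 0 < n ∧ Nonempty (A ≃ₐ[F] Matrix (Fin n) (Fin n) F)

/-- Brauer equivalence of two `F`-algebras. -/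
def BrauerEquiv (F : Type u) [Field F] (A B : Type u) [Ring A] [Algebra F A]
    [Ring B] [Algebra F B] : Prop :=
  ∃ n m : ℕ, 0 < n ∧ 0 < m ∧ Nonempty (Matrix (Fin n) (Fin n) A ≃ₐ[F] Matrix (Fin m) (Fin m) B)

/-- `A` is a finite-dimensional central simple `F`-algebra. -/
def IsCSA (F A : Type u) [Field F] [Ring A] [Algebra F A] : Prop :=
  Algebra.IsCentral F A ∧ IsSimpleRing A ∧ FiniteDimensional F A

/-- The `n`-fold tensor power of an `F`-algebra. -/
abbrev tpow (F : Type u) [Field F] (A : Type u) [Ring A] [Algebra F A] (n : ℕ) : Type u :=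
  ⨂[F] _ : Fin n, A

/-- The Brauer class of `A` is killed by `p`: its `p`-th tensor power is split. -/
def IsPTorsion (F : Type u) [Field F] (A : Type u) [Ring A] [Algebra F A] (p : ℕ) : Prop :=
  IsSplit F (tpow F A p)

/-- The restriction map `Br(F)[p] → Br(E)[p]` along `f : F →+* E` is injective:
two `p`-torsion Brauer classes that agree after scalar extension agree already over `F`. -/
def ResInjP (p : ℕ) (F E : Type u) [Field F] [Field E] (f : F →+* E) : Prop :=
  letI : Algebra F E := f.toAlgebra
  ∀ (A B : Type u) [Ring A] [Algebra F A] [Ring B] [Algebra F B],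
    IsCSA F A → IsCSA F B → IsPTorsion F A p → IsPTorsion F B p →
    BrauerEquiv E (E ⊗[F] A) (E ⊗[F] B) → BrauerEquiv F A B

/-- The restriction map `Br(F) → Br(E)` along `f : F →+* E` is injective. -/
def ResInj (F E : Type u) [Field F] [Field E] (f : F →+* E) : Prop :=
  letI : Algebra F E := f.toAlgebra
  ∀ (A B : Type u) [Ring A] [Algebra F A] [Ring B] [Algebra F B],
    IsCSA F A → IsCSA F B →
    BrauerEquiv E (E ⊗[F] A) (E ⊗[F] B) → BrauerEquiv F A B

/-- `D` is a central division algebra of degree `p` over `K`. -/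
def IsCentralDivisionOfDeg (K D : Type u) [Field K] [DivisionRing D] [Algebra K D]
    (p : ℕ) : Prop :=
  Algebra.IsCentral K D ∧ FiniteDimensional K D ∧ Module.finrank K D = p ^ 2

/-- Finitely many rational functions are regular at a common point, and can be evaluated there. -/
theorem exists_regular_subalgebra (K : Type u) [Field K] [Infinite K] {ι : Type*} [Finite ι]
    (f : ι → RatFunc K) :
    ∃ (S : Subalgebra K (RatFunc K)) (_ : S →ₐ[K] K), ∀ i, f i ∈ S := by
  cases nonempty_fintype ι
  have hg : (∏ i, (f i).denom) ≠ 0 := Finset.prod_ne_zero_iff.2 fun i _ => (f i).denom_ne_zero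
  obtain ⟨a, ha⟩ : ∃ a, Polynomial.eval a (∏ i, (f i).denom) ≠ 0 := by
    by_contra! h
    exact hg (Polynomial.funext (by simpa using h))
  have key : ∀ {p q : Polynomial K}, p ∣ q → q.eval a ≠ 0 → p.eval a ≠ 0 := by
    rintro p _ ⟨r, rfl⟩ h h0
    simp [h0] at h
  let S : Subalgebra K (RatFunc K) :=
    { carrier := {x | x.denom.eval a ≠ 0}
      mul_mem' := fun {x y} hx hy => key (RatFunc.denom_mul_dvd x y)
        (by rw [Polynomial.eval_mul]; exact mul_ne_zero hx hy)
      add_mem' := fun {x y} hx hy => key (RatFunc.denom_add_dvd x y)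
        (by rw [Polynomial.eval_mul]; exact mul_ne_zero hx hy)
      algebraMap_mem' := fun r => by
        rw [RatFunc.algebraMap_eq_C]
        simp [RatFunc.denom_C] }
  let ev : S →ₐ[K] K :=
    { toFun := fun x => RatFunc.eval (RingHom.id K) a x
      map_one' := by simp
      map_zero' := by simp
      map_mul' := fun x y => RatFunc.eval_mul (f := RingHom.id K) (a := a) x.2 y.2
      map_add' := fun x y => RatFunc.eval_add (f := RingHom.id K) (a := a) x.2 y.2
      commutes' := fun r => by
        change RatFunc.eval (RingHom.id K) a (algebraMap K (RatFunc K) r) = r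
        rw [RatFunc.algebraMap_eq_C]
        simp }
  refine ⟨S, ev, fun i => ?_⟩
  exact key (Finset.dvd_prod_of_mem (fun i => (f i).denom) (Finset.mem_univ i)) ha

theorem specialize_infinite (K : Type u) [Field K] [Infinite K] (A B : Type u) [Ring A]
    [Algebra K A] [Ring B] [Algebra K B] (hA : IsCSA K A) (hB : IsCSA K B)
    (h : BrauerEquiv (RatFunc K) (RatFunc K ⊗[K] A) (RatFunc K ⊗[K] B)) :
    BrauerEquiv K A B := by
  obtain ⟨n, m, hn, hm, ⟨e⟩⟩ := h
  obtain ⟨_, _, _⟩ := hA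
  obtain ⟨_, _, _⟩ := hB
  have : NeZero n := ⟨hn.ne'⟩
  refine ⟨n, m, hn, hm, ?_⟩
  let E := RatFunc K
  let h1 : Matrix (Fin n) (Fin n) A →ₐ[K] Matrix (Fin m) (Fin m) (E ⊗[K] B) :=
    (e.restrictScalars K).toAlgHom.comp
      (Algebra.TensorProduct.includeRight (R := K) (A := E) (B := A)).mapMatrix
  let bA := Module.finBasis K (Matrix (Fin n) (Fin n) A)
  let bB := Module.finBasis K B
  obtain ⟨S, ev, hS⟩ := exists_regular_subalgebra K
    (fun t : Fin _ × Fin m × Fin m × Fin _ =>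
      (bB.baseChange E).repr (h1 (bA t.1) t.2.1 t.2.2.1) t.2.2.2)
  let i0 : S ⊗[K] B →ₐ[K] E ⊗[K] B := Algebra.TensorProduct.map S.val (AlgHom.id K B)
  have hi0 : Function.Injective i0 :=
    Module.Flat.rTensor_preserves_injective_linearMap (M := B) S.val.toLinearMap
      Subtype.val_injective
  let i1 : Matrix (Fin m) (Fin m) (S ⊗[K] B) →ₐ[K] Matrix (Fin m) (Fin m) (E ⊗[K] B) :=
    i0.mapMatrix
  have hi1 : Function.Injective i1 := fun x y hxy => by
    ext i j
    exact hi0 (congrFun (congrFun hxy i) j)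
  have hbasis : ∀ k, h1 (bA k) ∈ i1.range := by
    intro k
    have hent : ∀ i j, ∃ u, i0 u = h1 (bA k) i j := by
      intro i j
      rw [← (bB.baseChange E).sum_repr (h1 (bA k) i j)]
      refine ⟨∑ l, (⟨_, hS (k, i, j, l)⟩ : S) ⊗ₜ[K] bB l, ?_⟩
      rw [map_sum]
      refine Finset.sum_congr rfl fun l _ => ?_
      simp [i0, Module.Basis.baseChange_apply, TensorProduct.smul_tmul']
    choose u hu using hent
    exact ⟨Matrix.of u, by ext i j; exact hu i j⟩
  have hrange : ∀ x, h1 x ∈ i1.range := by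
    intro x
    rw [← bA.sum_repr x, map_sum]
    refine sum_mem fun k _ => ?_
    rw [map_smul]
    exact Subalgebra.smul_mem _ (hbasis k) _
  let h2 : Matrix (Fin n) (Fin n) A →ₐ[K] Matrix (Fin m) (Fin m) (S ⊗[K] B) :=
    (AlgEquiv.ofInjective i1 hi1).symm.toAlgHom.comp (h1.codRestrict i1.range hrange)
  let ev1 : S ⊗[K] B →ₐ[K] B :=
    Algebra.TensorProduct.lift ((Algebra.ofId K B).comp ev) (AlgHom.id K B)
      (fun x y => Algebra.commutes _ _)
  let h3 : Matrix (Fin n) (Fin n) A →ₐ[K] Matrix (Fin m) (Fin m) B := ev1.mapMatrix.comp h2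
  have : NeZero m := ⟨hm.ne'⟩
  have hinj : Function.Injective h3 := by
    have : Nontrivial (Matrix (Fin m) (Fin m) B) := inferInstance
    exact RingHom.injective h3.toRingHom
  have hdim : Module.finrank K (Matrix (Fin n) (Fin n) A)
      = Module.finrank K (Matrix (Fin m) (Fin m) B) := by
    have := e.toLinearEquiv.finrank_eq
    rw [Module.finrank_matrix, Module.finrank_matrix, Module.finrank_baseChange,
      Module.finrank_baseChange] at this
    rw [Module.finrank_matrix, Module.finrank_matrix, this]
  have hsurj : Function.Surjective h3 :=
    (LinearMap.injective_iff_surjective_of_finrank_eq_finrank (f := h3.toLinearMap) hdim).1 hinj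
  exact ⟨AlgEquiv.ofBijective h3 ⟨hinj, hsurj⟩⟩

theorem split_finite (K : Type u) [Field K] [Finite K] (A : Type u) [Ring A] [Algebra K A]
    (hA : IsCSA K A) : IsSplit K A := by
  obtain ⟨_, _, _⟩ := hA
  have : IsArtinianRing A := IsArtinianRing.of_finite K A
  obtain ⟨n, hn, D, _, _, _, ⟨e⟩⟩ :=
    IsSimpleRing.exists_algEquiv_matrix_divisionRing_finite K A
  have : Finite D := Module.finite_of_finite K
  have hcomm : ∀ x y : D, x * y = y * x := (littleWedderburn D).mul_comm
  have hsurj : Function.Surjective (algebraMap K D) := by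
    intro d
    have hc : e.symm (Matrix.scalar (Fin n) d) ∈ Subalgebra.center K A := by
      rw [Subalgebra.mem_center_iff]
      intro b
      apply e.injective
      rw [map_mul, map_mul, e.apply_symm_apply]
      exact (Matrix.scalar_commute d (fun r => hcomm d r) (e b)).eq.symm
    obtain ⟨k, hk⟩ := Algebra.mem_bot.1 (Algebra.IsCentral.out hc)
    refine ⟨k, ?_⟩
    have h2 : algebraMap K (Matrix (Fin n) (Fin n) D) k = Matrix.scalar (Fin n) d := by
      rw [← e.commutes, hk, e.apply_symm_apply]
    have h3 := congrFun (congrFun h2 0) 0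
    simpa [Matrix.algebraMap_matrix_apply] using h3
  let e2 : K ≃ₐ[K] D := AlgEquiv.ofBijective (Algebra.ofId K D)
    ⟨(algebraMap K D).injective, hsurj⟩
  exact ⟨n, Nat.pos_of_ne_zero hn.out, ⟨e.trans e2.symm.mapMatrix⟩⟩

open Matrix in
theorem brauerEquiv_of_split (K : Type u) [Field K] (A B : Type u) [Ring A] [Algebra K A]
    [Ring B] [Algebra K B] (hA : IsSplit K A) (hB : IsSplit K B) : BrauerEquiv K A B := by
  obtain ⟨r, hr, ⟨e⟩⟩ := hA
  obtain ⟨s, hs, ⟨f⟩⟩ := hB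
  exact ⟨s, r, hs, hr, ⟨(e.mapMatrix (m := Fin s)).trans <| (compAlgEquiv _ _ _ _).trans <|
    (reindexAlgEquiv K K (.prodComm (Fin s) (Fin r))).trans <|
    (compAlgEquiv _ _ _ _).symm.trans (f.symm.mapMatrix (m := Fin r))⟩⟩

theorem resInj_aux (K : Type u) [Field K] (a : Algebra K (RatFunc K))
    (ha : a = RatFunc.instAlgebraOfPolynomial K K) :
    letI := a
    ∀ (A B : Type u) [Ring A] [Algebra K A] [Ring B] [Algebra K B],
    IsCSA K A → IsCSA K B →
    BrauerEquiv (RatFunc K) (RatFunc K ⊗[K] A) (RatFunc K ⊗[K] B) → BrauerEquiv K A B := by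
  subst ha
  intro A B _ _ _ _ hA hB h
  cases finite_or_infinite K
  · exact brauerEquiv_of_split K A B (split_finite K A hA) (split_finite K B hB)
  · exact specialize_infinite K A B hA hB h

/-- The restriction map `Br(K) → Br(K(x))` to the rational function field
is injective. -/
theorem resInj_ratFunc (K : Type u) [Field K] :
    ResInj K (RatFunc K) (algebraMap K (RatFunc K)) := by
  have halg : (algebraMap K (RatFunc K)).toAlgebra = RatFunc.instAlgebraOfPolynomial K K :=
    Algebra.algebra_ext _ _ fun _ => rfl
  exact resInj_aux K _ halg
end

section
/- Let F be a field and C a central simple F-algebra. The kernel of the restriction map Br(F) → Br(F(SB(C))), where F(SB(C)) is the function field of the Severi–Brauer variety of C, is the cyclic subgroup of Br(F) generated by the class [C]. -/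
open scoped TensorProduct
universe u

/-- An `F`-place from `E` to `N`: a valuation subring of `E` containing (the image of) `F`
together with an `F`-compatible ring homomorphism to `N`. -/
structure FPlace (F E N : Type u) [Field F] [Field E] [Field N]
    [Algebra F E] [Algebra F N] : Type u where
  V : ValuationSubring E
  f : V →+* N
  compat : ∀ a : F, ∃ h : algebraMap F E a ∈ V, f ⟨algebraMap F E a, h⟩ = algebraMap F N a

/-- `E` is a generic splitting field of the central simple `F`-algebra `C`: it splits `C`,
and it admits an `F`-place into every field extension of `F` splitting `C`.  The function
field `F(SB(C))` of the Severi–Brauer variety of `C` is such a field (Amitsur). -/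
def IsGenericSplittingField (F C E : Type u) [Field F] [Ring C] [Algebra F C]
    [Field E] [Algebra F E] : Prop :=
  IsSplit E (E ⊗[F] C) ∧
    ∀ (N : Type u) [Field N] [Algebra F N], IsSplit N (N ⊗[F] C) → Nonempty (FPlace F E N)

namespace Amitsur

section density
variable {F A : Type*} [Field F] [Ring A] [Algebra F A]

theorem mulLeftRight_surjective [Algebra.IsCentral F A] [IsSimpleRing A] [FiniteDimensional F A] :
    Function.Surjective (AlgHom.mulLeftRight F A) := by
  let R := (AlgHom.mulLeftRight F A).range
  have hR : ∀ p q : A, (AlgHom.mulLeftRight F A (p ⊗ₜ MulOpposite.op q)) ∈ R :=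
    fun p q => ⟨_, rfl⟩
  have hsimple : IsSimpleModule R A := by
    rw [isSimpleModule_iff]
    have : Nontrivial (Submodule R A) := inferInstance
    refine ⟨fun N => ?_⟩
    have hl : ∀ (p q x : A), x ∈ N → p * x * q ∈ N := by
      intro p q x hx
      have := N.smul_mem (⟨_, hR p q⟩ : R) hx
      rw [Subalgebra.smul_def] at this
      simpa using this
    let I : TwoSidedIdeal A := TwoSidedIdeal.mk' (N : Set A) N.zero_mem N.add_mem
      (fun {x} hx => by simpa using hl (-1) 1 x hx)
      (fun {x y} hy => by simpa using hl x 1 y hy) (fun {x y} hx => by simpa using hl 1 y x hx)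
    have hI : ∀ x, x ∈ I ↔ x ∈ N := fun x => by simp [I, TwoSidedIdeal.mem_mk']
    rcases eq_bot_or_eq_top I with h | h
    · left
      rw [eq_bot_iff]
      intro x hx
      have := (hI x).2 hx
      rw [h] at this
      simpa using this
    · right
      rw [eq_top_iff]
      intro x _
      exact (hI x).1 (h ▸ trivial)
  intro φ
  -- endomorphisms of A over R are scalars
  have hend : ∀ f : Module.End R A, ∃ c : F, ∀ x, f x = c • x := by
    intro f
    have h1 : ∀ p q x : A, f (p * x * q) = p * f x * q := by
      intro p q x
      have := f.map_smul (⟨_, hR p q⟩ : R) x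
      rw [Subalgebra.smul_def, Subalgebra.smul_def] at this
      simpa using this
    have hx : ∀ x, f x = x * f 1 := fun x => by simpa using h1 x 1 1
    have hx' : ∀ x, f x = f 1 * x := fun x => by simpa using h1 1 x 1
    have hc : f 1 ∈ Subalgebra.center F A := by
      rw [Subalgebra.mem_center_iff]
      intro b
      rw [← hx, ← hx']
    obtain ⟨c, hc⟩ := (Algebra.IsCentral.mem_center_iff F).1 hc
    exact ⟨c, fun x => by rw [hx', hc, Algebra.smul_def]⟩
  let φ' : Module.End (Module.End R A) A :=
    { toFun := φ
      map_add' := φ.map_add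
      map_smul' := by
        intro f x
        obtain ⟨c, hc⟩ := hend f
        simp [hc] }
  let b := Module.finBasis F A
  classical
  obtain ⟨⟨r, t, ht⟩, hr⟩ := jacobson_density (R := R) (M := A) φ' (Finset.univ.image b)
  refine ⟨t, b.ext fun i => ?_⟩
  have := hr (b i) (by simp)
  rw [Subalgebra.smul_def] at this
  simp only [φ'] at this
  change _ = r (b i) at this
  rw [← ht] at this
  exact this.symm

/-- Every linear endomorphism of a central simple algebra is a multiplication operator. -/
theorem exists_mul_repr [Algebra.IsCentral F A] [IsSimpleRing A] [FiniteDimensional F A]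
    (φ : Module.End F A) : ∃ s : Finset (A × A), ∀ x, φ x = ∑ p ∈ s, p.1 * x * p.2 := by
  classical
  obtain ⟨t, rfl⟩ := mulLeftRight_surjective φ
  obtain ⟨s, rfl⟩ := TensorProduct.exists_finset t
  refine ⟨s.map ⟨fun p => (p.1, p.2.unop), fun p q h => by
    simp only [Prod.mk.injEq, MulOpposite.unop_inj] at h; exact Prod.ext h.1 h.2⟩, fun x => ?_⟩
  rw [map_sum, Finset.sum_map]
  simp only [LinearMap.sum_apply, AlgHom.mulLeftRight_apply]
  rfl

end density

section baseChange
variable {F A E : Type*} [Field F] [Ring A] [Algebra F A] [Field E] [Algebra F E]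
  [Algebra.IsCentral F A] [IsSimpleRing A] [FiniteDimensional F A]

/-- A central simple algebra maps to linearly independent elements. -/
theorem linearIndependent_of_hom {R : Type*} [Ring R] [Nontrivial R] [Algebra F R] [Algebra E R]
    [IsScalarTower F E R] (ρ : A →ₐ[F] R) {κ : Type*} (b : Module.Basis κ F A) :
    LinearIndependent E (fun i => ρ (b i)) := by
  classical
  rw [linearIndependent_iff']
  intro s g hg k hk
  obtain ⟨t, ht⟩ := exists_mul_repr (b.constr F (fun i => if i = k then (1 : A) else 0))
  have h1 : ∑ i ∈ s, g i • ρ (b.constr F (fun i => if i = k then (1 : A) else 0) (b i)) = 0 := by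
    calc _ = ∑ i ∈ s, g i • ∑ p ∈ t, ρ p.1 * ρ (b i) * ρ p.2 := by
            refine Finset.sum_congr rfl fun i _ => ?_
            rw [ht]; simp
      _ = ∑ p ∈ t, ρ p.1 * (∑ i ∈ s, g i • ρ (b i)) * ρ p.2 := by
            simp_rw [Finset.smul_sum, Finset.mul_sum, Finset.sum_mul]
            rw [Finset.sum_comm]
            simp
      _ = 0 := by simp [hg]
  simp only [Module.Basis.constr_basis] at h1
  rw [Finset.sum_eq_single k] at h1
  · simpa using h1
  · intro i _ hi; simp [hi]
  · intro h; exact absurd hk h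

theorem baseChange_simple : IsSimpleRing (E ⊗[F] A) := by
  classical
  have : Nontrivial (E ⊗[F] A) := inferInstance
  refine ⟨⟨fun I => ?_⟩⟩
  by_cases hI : I = ⊥
  · exact Or.inl hI
  right
  obtain ⟨z, hz, hz0⟩ : ∃ z ∈ I, z ≠ 0 := by
    by_contra! h
    apply hI
    rw [eq_bot_iff]
    intro x hx
    simpa using h x hx
  let b := Module.finBasis F A
  let bE := Algebra.TensorProduct.basis E b
  obtain ⟨k, hk⟩ : ∃ k, bE.repr z k ≠ 0 := by
    by_contra! h
    exact hz0 (bE.ext_elem (by simpa using h))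
  obtain ⟨t, ht⟩ := exists_mul_repr (b.constr F (fun i => if i = k then (1 : A) else 0))
  have key : ∑ p ∈ t, ((1 : E) ⊗ₜ[F] p.1) * z * ((1 : E) ⊗ₜ[F] p.2)
      = (bE.repr z k) ⊗ₜ[F] (1 : A) := by
    conv_lhs => rw [← bE.sum_repr z]
    simp_rw [Finset.mul_sum, Finset.sum_mul]
    rw [Finset.sum_comm]
    rw [Finset.sum_eq_single k]
    · have := ht (b k)
      simp only [Module.Basis.constr_basis, if_true] at this
      simp only [bE, Algebra.TensorProduct.basis_apply, TensorProduct.smul_tmul',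
        Algebra.TensorProduct.tmul_mul_tmul, ← TensorProduct.tmul_sum, ← this]
      simp
    · intro i _ hi
      have := ht (b i)
      simp only [Module.Basis.constr_basis, if_neg hi] at this
      simp only [bE, Algebra.TensorProduct.basis_apply, TensorProduct.smul_tmul',
        Algebra.TensorProduct.tmul_mul_tmul, one_mul, mul_one, ← TensorProduct.tmul_sum, ← this]
      simp
    · simp
  have hmem : (bE.repr z k) ⊗ₜ[F] (1 : A) ∈ I := by
    rw [← key]
    exact sum_mem fun p _ => I.mul_mem_right _ _ (I.mul_mem_left _ _ hz)
  have h1 : (1 : E ⊗[F] A) ∈ I := by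
    have := I.mul_mem_left ((bE.repr z k)⁻¹ ⊗ₜ[F] (1 : A)) _ hmem
    rw [Algebra.TensorProduct.tmul_mul_tmul, inv_mul_cancel₀ hk, one_mul] at this
    exact this
  rw [eq_top_iff]
  intro x _
  simpa using I.mul_mem_left x _ h1

theorem baseChange_central : Algebra.IsCentral E (E ⊗[F] A) := by
  classical
  constructor
  intro z hz
  rw [Subalgebra.mem_center_iff] at hz
  obtain ⟨f, hf⟩ : ∃ f : A →ₗ[F] F, f 1 = 1 :=
    Module.Projective.exists_dual_eq_one F one_ne_zero
  obtain ⟨t, ht⟩ := exists_mul_repr ((Algebra.linearMap F A) ∘ₗ f)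
  have h1 : ∑ p ∈ t, ((1 : E) ⊗ₜ[F] p.1) * z * ((1 : E) ⊗ₜ[F] p.2) = z := by
    have : ∀ p : A × A, ((1 : E) ⊗ₜ[F] p.1) * z * ((1 : E) ⊗ₜ[F] p.2)
        = z * ((1 : E) ⊗ₜ[F] (p.1 * 1 * p.2)) := by
      intro p
      rw [hz, mul_assoc, Algebra.TensorProduct.tmul_mul_tmul]
      simp
    simp_rw [this, ← Finset.mul_sum, ← TensorProduct.tmul_sum, ← ht]
    simp [hf, ← Algebra.TensorProduct.one_def]
  have h2 : ∀ w : E ⊗[F] A, ∑ p ∈ t, ((1 : E) ⊗ₜ[F] p.1) * w * ((1 : E) ⊗ₜ[F] p.2) ∈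
      (⊥ : Subalgebra E (E ⊗[F] A)) := by
    intro w
    induction w using TensorProduct.induction_on with
    | zero => simp
    | tmul e a =>
      simp only [Algebra.TensorProduct.tmul_mul_tmul, one_mul, mul_one, ← TensorProduct.tmul_sum,
        ← ht]
      rw [Algebra.mem_bot]
      refine ⟨f a • e, ?_⟩
      rw [Algebra.TensorProduct.algebraMap_apply, Algebra.algebraMap_self_apply,
        TensorProduct.smul_tmul]
      simp [Algebra.algebraMap_eq_smul_one]
    | add x y hx hy =>
      simp only [mul_add, add_mul, Finset.sum_add_distrib]
      exact add_mem hx hy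
  rw [← h1]
  exact h2 z

end baseChange

end Amitsur

set_option linter.unusedSectionVars false
set_option linter.unusedSimpArgs false

namespace Amitsur

section full
variable {F A E : Type*} [Field F] [Ring A] [Algebra F A] [Field E] [Algebra F E]
  {ι : Type*} [Fintype ι] [DecidableEq ι]

/-- A representation by `n × n` matrices over `E` which spans the matrix algebra, of an algebra
of dimension `n²`. -/
def Full (ρ : A →ₐ[F] Matrix ι ι E) : Prop :=
  Submodule.span E (Set.range ρ) = ⊤ ∧ Fintype.card ι ^ 2 = Module.finrank F A

theorem full_of_csa [Algebra.IsCentral F A] [IsSimpleRing A] [FiniteDimensional F A]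
    (ρ : A →ₐ[F] Matrix ι ι E) (h : Fintype.card ι ^ 2 = Module.finrank F A) : Full ρ := by
  refine ⟨?_, h⟩
  have hpos : 0 < Module.finrank F A := Module.finrank_pos
  have : Nonempty ι := by
    rw [← Fintype.card_pos_iff]
    rw [← h] at hpos
    exact Nat.pos_of_ne_zero (by rintro h0; simp [h0] at hpos)
  have hli := linearIndependent_of_hom (E := E) ρ (Module.finBasis F A)
  have := hli.span_eq_top_of_card_eq_finrank' (by simp [Module.finrank_matrix, ← h, sq])
  rw [eq_top_iff, ← this, Submodule.span_le]
  rintro _ ⟨i, rfl⟩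
  exact Submodule.subset_span ⟨_, rfl⟩

variable {ρ : A →ₐ[F] Matrix ι ι E}

/-- extension of scalars of a representation -/
noncomputable def liftE (ρ : A →ₐ[F] Matrix ι ι E) : E ⊗[F] A →ₐ[E] Matrix ι ι E :=
  Algebra.TensorProduct.lift (Algebra.ofId E _) ρ (fun x y => Algebra.commutes x (ρ y))

@[simp] theorem liftE_tmul (ρ : A →ₐ[F] Matrix ι ι E) (e : E) (a : A) :
    liftE ρ (e ⊗ₜ a) = e • ρ a := by
  refine (Algebra.TensorProduct.lift_tmul _ _ _ _ _).trans ?_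
  rw [Algebra.ofId_apply, Algebra.smul_def]

theorem Full.liftE_surjective (h : Full ρ) : Function.Surjective (liftE ρ) := by
  change Function.Surjective (liftE ρ).toLinearMap
  rw [← LinearMap.range_eq_top, eq_top_iff, ← h.1, Submodule.span_le]
  rintro _ ⟨a, rfl⟩
  exact ⟨1 ⊗ₜ a, by simp⟩

theorem Full.liftE_bijective [FiniteDimensional F A] (h : Full ρ) :
    Function.Bijective (liftE ρ) := by
  have hs : Function.Surjective (liftE ρ).toLinearMap := h.liftE_surjective
  refine ⟨?_, h.liftE_surjective⟩
  exact (LinearMap.injective_iff_surjective_of_finrank_eq_finrank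
    (by simp [Module.finrank_matrix, ← h.2, sq])).2 hs

theorem Full.injective [FiniteDimensional F A] (h : Full ρ) : Function.Injective ρ := by
  intro x y hxy
  have : (1 : E) ⊗ₜ[F] x = (1 : E) ⊗ₜ[F] y := h.liftE_bijective.1 (by simp [hxy])
  exact Algebra.TensorProduct.includeRight_injective (A := E) (B := A)
    (algebraMap F E).injective this

theorem Full.ext_commute (h : Full ρ) {M : Matrix ι ι E} (hM : ∀ x, M * ρ x = ρ x * M) :
    ∀ X, M * X = X * M := by
  intro X
  have : X ∈ Submodule.span E (Set.range ρ) := h.1 ▸ trivial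
  induction this using Submodule.span_induction with
  | mem x hx => obtain ⟨a, rfl⟩ := hx; exact hM a
  | zero => simp
  | add x y _ _ hx hy => simp [mul_add, add_mul, hx, hy]
  | smul c x _ hx => simp [hx]

theorem Full.commutant (h : Full ρ) {M : Matrix ι ι E} (hM : ∀ x, M * ρ x = ρ x * M) :
    ∃ c : E, M = c • 1 := by
  have : M ∈ Subalgebra.center E (Matrix ι ι E) := by
    rw [Subalgebra.mem_center_iff]
    intro X
    exact (h.ext_commute hM X).symm
  obtain ⟨c, hc⟩ := (Algebra.IsCentral.mem_center_iff E).1 this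
  exact ⟨c, by rw [hc, Algebra.algebraMap_eq_smul_one]⟩

theorem matrix_skolem_noether (f : Matrix ι ι E ≃ₐ[E] Matrix ι ι E) :
    ∃ P : (Matrix ι ι E)ˣ, ∀ X, f X * (P : Matrix ι ι E) = P * X := by
  let T := Matrix.toLinAlgEquiv' (R := E) (n := ι)
  obtain ⟨e, he⟩ := LinearEquiv.conjAlgEquiv_surjective E (ι → E) (ι → E)
    ((T.symm.trans f).trans T)
  let u : (Module.End E (ι → E))ˣ := LinearMap.GeneralLinearGroup.ofLinearEquiv e
  refine ⟨Units.map (T.symm : _ →* _) u, fun X => ?_⟩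
  apply T.injective
  have h1 : T (f X) = (e.conjAlgEquiv E) (T X) := by rw [he]; simp
  rw [map_mul, map_mul, h1]
  have h2 : T ((Units.map (T.symm : Module.End E (ι → E) →* Matrix ι ι E)) u : Matrix ι ι E)
      = (e : (ι → E) →ₗ[E] (ι → E)) := by
    exact T.apply_symm_apply _
  rw [h2]
  refine LinearMap.ext fun v => ?_
  simp [LinearEquiv.conjAlgEquiv_apply, Module.End.mul_apply]

theorem skolem_noether [FiniteDimensional F A] {ρ ρ' : A →ₐ[F] Matrix ι ι E}
    (h : Full ρ) (h' : Full ρ') :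
    ∃ P : (Matrix ι ι E)ˣ, ∀ x, ρ' x * (P : Matrix ι ι E) = P * ρ x := by
  let e := AlgEquiv.ofBijective _ h.liftE_bijective
  let e' := AlgEquiv.ofBijective _ h'.liftE_bijective
  obtain ⟨P, hP⟩ := matrix_skolem_noether (e.symm.trans e')
  refine ⟨P, fun x => ?_⟩
  have h1 : e (1 ⊗ₜ x) = ρ x := by simp [e]
  have h2 : e' (1 ⊗ₜ x) = ρ' x := by simp [e']
  have := hP (ρ x)
  rw [AlgEquiv.trans_apply, ← h1, AlgEquiv.symm_apply_apply, h2, h1] at this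
  exact this

end full

/-- `E` splits `A`, in terms of representations. -/
def Spl (F A E : Type*) [Field F] [Ring A] [Algebra F A] [Field E] [Algebra F E] : Prop :=
  ∃ n : ℕ, n ^ 2 = Module.finrank F A ∧ Nonempty (A →ₐ[F] Matrix (Fin n) (Fin n) E)

theorem isSplit_of_full {F A E : Type u} [Field F] [Ring A] [Algebra F A] [Field E] [Algebra F E]
    [FiniteDimensional F A] {n : ℕ} (hn : 0 < n) {ρ : A →ₐ[F] Matrix (Fin n) (Fin n) E}
    (h : Full ρ) : IsSplit E (E ⊗[F] A) :=
  ⟨n, hn, ⟨AlgEquiv.ofBijective _ h.liftE_bijective⟩⟩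

theorem isSplit_of_spl {F A E : Type u} [Field F] [Ring A] [Algebra F A] [Field E] [Algebra F E]
    [Algebra.IsCentral F A] [IsSimpleRing A] [FiniteDimensional F A] (h : Spl F A E) :
    IsSplit E (E ⊗[F] A) := by
  obtain ⟨n, hn, ⟨ρ⟩⟩ := h
  have hpos : 0 < Module.finrank F A := Module.finrank_pos
  refine isSplit_of_full (Nat.pos_of_ne_zero ?_) (full_of_csa ρ (by simpa using hn))
  rintro rfl
  simp [← hn] at hpos

theorem spl_of_isSplit {F A E : Type u} [Field F] [Ring A] [Algebra F A] [Field E] [Algebra F E]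
    (h : IsSplit E (E ⊗[F] A)) : Spl F A E := by
  obtain ⟨n, hn, ⟨e⟩⟩ := h
  refine ⟨n, ?_, ⟨(e.toAlgHom.restrictScalars F).comp Algebra.TensorProduct.includeRight⟩⟩
  have := e.toLinearEquiv.finrank_eq
  simp [Module.finrank_matrix, Module.finrank_baseChange] at this
  rw [this, sq]

section kron
variable {F A A' E : Type*} [Field F] [Ring A] [Algebra F A] [Ring A'] [Algebra F A'] [Field E]
  [Algebra F E] {ι κ : Type*} [Fintype ι] [DecidableEq ι] [Fintype κ] [DecidableEq κ]

open scoped Kronecker in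
/-- tensor product of two representations -/
noncomputable def kronHom (ρ : A →ₐ[F] Matrix ι ι E) (ρ' : A' →ₐ[F] Matrix κ κ E) :
    A ⊗[F] A' →ₐ[F] Matrix (ι × κ) (ι × κ) E :=
  Algebra.TensorProduct.lift
    (AlgHom.ofLinearMap
      { toFun := fun x => ρ x ⊗ₖ (1 : Matrix κ κ E)
        map_add' := fun x y => by rw [map_add, Matrix.add_kronecker]
        map_smul' := fun c x => by rw [map_smul, Matrix.smul_kronecker, RingHom.id_apply] }
      (by simp) (fun x y => by simp [← Matrix.mul_kronecker_mul]))
    (AlgHom.ofLinearMap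
      { toFun := fun x => (1 : Matrix ι ι E) ⊗ₖ ρ' x
        map_add' := fun x y => by rw [map_add, Matrix.kronecker_add]
        map_smul' := fun c x => by rw [map_smul, Matrix.kronecker_smul, RingHom.id_apply] }
      (by simp) (fun x y => by simp [← Matrix.mul_kronecker_mul]))
    (fun x y => by
      simp [Commute, SemiconjBy, ← Matrix.mul_kronecker_mul])

open scoped Kronecker in
@[simp] theorem kronHom_tmul (ρ : A →ₐ[F] Matrix ι ι E) (ρ' : A' →ₐ[F] Matrix κ κ E) (x : A)
    (y : A') : kronHom ρ ρ' (x ⊗ₜ y) = ρ x ⊗ₖ ρ' y := by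
  refine (Algebra.TensorProduct.lift_tmul _ _ _ _ _).trans ?_
  change (ρ x ⊗ₖ (1 : Matrix κ κ E)) * ((1 : Matrix ι ι E) ⊗ₖ ρ' y) = _
  simp [← Matrix.mul_kronecker_mul]

open scoped Kronecker in
theorem Full.kron {ρ : A →ₐ[F] Matrix ι ι E} {ρ' : A' →ₐ[F] Matrix κ κ E} (h : Full ρ)
    (h' : Full ρ') : Full (kronHom ρ ρ') := by
  constructor
  · have h1 : ∀ X Y, X ⊗ₖ Y ∈ Submodule.span E (Set.range (kronHom ρ ρ')) := by
      intro X Y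
      have hX : X ∈ Submodule.span E (Set.range ρ) := h.1 ▸ trivial
      have hY : Y ∈ Submodule.span E (Set.range ρ') := h'.1 ▸ trivial
      induction hX using Submodule.span_induction with
      | mem x hx =>
        obtain ⟨a, rfl⟩ := hx
        induction hY using Submodule.span_induction with
        | mem y hy =>
          obtain ⟨b, rfl⟩ := hy
          exact Submodule.subset_span ⟨a ⊗ₜ b, by simp⟩
        | zero => simp
        | add x y _ _ hx hy => rw [Matrix.kronecker_add]; exact add_mem hx hy
        | smul c x _ hx => rw [Matrix.kronecker_smul]; exact Submodule.smul_mem _ _ hx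
      | zero => simp
      | add x y _ _ hx hy => rw [Matrix.add_kronecker]; exact add_mem hx hy
      | smul c x _ hx => rw [Matrix.smul_kronecker]; exact Submodule.smul_mem _ _ hx
    rw [eq_top_iff]
    intro X _
    rw [Matrix.matrix_eq_sum_single X]
    refine sum_mem fun i _ => sum_mem fun j _ => ?_
    have := h1 (Matrix.single i.1 j.1 (X i j)) (Matrix.single i.2 j.2 1)
    rw [Matrix.single_kronecker_single] at this
    simpa using this
  · rw [Module.finrank_tensorProduct, ← h.2, ← h'.2, Fintype.card_prod, mul_pow]

/-- opposite of a representation -/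
def opHom (ρ : A →ₐ[F] Matrix ι ι E) : Aᵐᵒᵖ →ₐ[F] Matrix ι ι E :=
  AlgHom.ofLinearMap
    { toFun := fun x => (ρ x.unop).transpose
      map_add' := fun x y => by simp
      map_smul' := fun c x => by simp }
    (by simp) (fun x y => by simp [Matrix.transpose_mul])

@[simp] theorem opHom_apply (ρ : A →ₐ[F] Matrix ι ι E) (x : Aᵐᵒᵖ) :
    opHom ρ x = (ρ x.unop).transpose := rfl

theorem Full.op {ρ : A →ₐ[F] Matrix ι ι E} (h : Full ρ) : Full (opHom ρ) := by
  constructor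
  · rw [eq_top_iff]
    intro X _
    have : X.transpose ∈ Submodule.span E (Set.range ρ) := h.1 ▸ trivial
    rw [← Matrix.transpose_transpose X]
    generalize X.transpose = Y at this ⊢
    induction this using Submodule.span_induction with
    | mem x hx =>
      obtain ⟨a, rfl⟩ := hx
      exact Submodule.subset_span ⟨MulOpposite.op a, rfl⟩
    | zero => simp
    | add x y _ _ hx hy => rw [Matrix.transpose_add]; exact add_mem hx hy
    | smul c x _ hx => rw [Matrix.transpose_smul]; exact Submodule.smul_mem _ _ hx
  · rw [h.2]
    exact (MulOpposite.opLinearEquiv F : A ≃ₗ[F] Aᵐᵒᵖ).finrank_eq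

/-- Kronecker product of a family of matrices. -/
def piKron {k : ℕ} (M : Fin k → Matrix ι ι E) : Matrix (Fin k → ι) (Fin k → ι) E :=
  fun f g => ∏ i, M i (f i) (g i)

theorem piKron_mul {k : ℕ} (M N : Fin k → Matrix ι ι E) :
    piKron M * piKron N = piKron (fun i => M i * N i) := by
  ext f g
  simp only [piKron, Matrix.mul_apply, ← Finset.prod_mul_distrib]
  rw [Finset.prod_univ_sum]
  simp [Fintype.piFinset_univ]

theorem piKron_one {k : ℕ} : piKron (fun _ : Fin k => (1 : Matrix ι ι E)) = 1 := by
  ext f g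
  simp only [piKron, Matrix.one_apply]
  by_cases h : f = g
  · simp [h]
  · rw [if_neg h]
    obtain ⟨i, hi⟩ := Function.ne_iff.1 h
    exact Finset.prod_eq_zero (Finset.mem_univ i) (by simp [hi])

theorem piKron_smul {k : ℕ} (c : E) (M : Fin k → Matrix ι ι E) :
    piKron (fun i => c • M i) = c ^ k • piKron M := by
  ext f g
  simp [piKron, Finset.prod_mul_distrib]

/-- Kronecker product as a multilinear map -/
def piKronMulti (F : Type*) [Field F] [Algebra F E] (k : ℕ) :
    MultilinearMap F (fun _ : Fin k => Matrix ι ι E) (Matrix (Fin k → ι) (Fin k → ι) E) where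
  toFun := piKron
  map_update_add' := by
    intro _ M i x y
    ext f g
    simp only [piKron, Matrix.add_apply]
    rw [← Finset.mul_prod_erase _ _ (Finset.mem_univ i),
      ← Finset.mul_prod_erase _ _ (Finset.mem_univ i),
      ← Finset.mul_prod_erase _ _ (Finset.mem_univ i)]
    have : ∀ z : Matrix ι ι E, ∏ j ∈ Finset.univ.erase i, Function.update M i z j (f j) (g j)
        = ∏ j ∈ Finset.univ.erase i, M j (f j) (g j) := fun z =>
      Finset.prod_congr rfl fun j hj => by rw [Function.update_of_ne (Finset.ne_of_mem_erase hj)]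
    have h2 : ∀ z : Matrix ι ι E, Function.update M i z i = z := fun z => by simp
    simp only [this, h2, Matrix.add_apply, add_mul]
  map_update_smul' := by
    intro _ M i c x
    ext f g
    simp only [piKron, Matrix.smul_apply]
    rw [← Finset.mul_prod_erase _ _ (Finset.mem_univ i),
      ← Finset.mul_prod_erase _ _ (Finset.mem_univ i)]
    have : ∀ z : Matrix ι ι E, ∏ j ∈ Finset.univ.erase i, Function.update M i z j (f j) (g j)
        = ∏ j ∈ Finset.univ.erase i, M j (f j) (g j) := fun z =>
      Finset.prod_congr rfl fun j hj => by rw [Function.update_of_ne (Finset.ne_of_mem_erase hj)]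
    have h2 : ∀ z : Matrix ι ι E, Function.update M i z i = z := fun z => by simp
    simp only [this, h2, Matrix.smul_apply, smul_mul_assoc]

/-- tensor power of a representation -/
noncomputable def powHom (ρ : A →ₐ[F] Matrix ι ι E) (k : ℕ) :
    (⨂[F] _ : Fin k, A) →ₐ[F] Matrix (Fin k → ι) (Fin k → ι) E :=
  PiTensorProduct.liftAlgHom ((piKronMulti F k).compLinearMap (fun _ => ρ.toLinearMap))
    (by
      change piKron (fun i => ρ 1) = 1
      simp [piKron_one])
    (fun x y => by
      change piKron (fun i => ρ (x i * y i)) = piKron (fun i => ρ (x i)) * piKron (fun i => ρ (y i))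
      simp [piKron_mul])

theorem powHom_tprod (ρ : A →ₐ[F] Matrix ι ι E) (k : ℕ) (x : Fin k → A) :
    powHom ρ k (PiTensorProduct.tprod F x) = piKron (fun i => ρ (x i)) := by
  simp only [powHom, PiTensorProduct.liftAlgHom, AlgHom.ofLinearMap_apply,
    PiTensorProduct.lift.tprod]
  rfl

theorem Full.pow [FiniteDimensional F A] {ρ : A →ₐ[F] Matrix ι ι E} (h : Full ρ) (k : ℕ) :
    Full (powHom ρ k) := by
  constructor
  · have h1 : ∀ (s : Finset (Fin k)) (M : Fin k → Matrix ι ι E),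
        (∀ i ∉ s, M i ∈ Set.range ρ) → piKron M ∈ Submodule.span E (Set.range (powHom ρ k)) := by
      intro s
      induction s using Finset.induction_on with
      | empty =>
        intro M hM
        choose x hx using fun i => hM i (by simp)
        refine Submodule.subset_span ⟨PiTensorProduct.tprod F x, ?_⟩
        rw [powHom_tprod]
        congr 1
        ext1 i
        exact hx i
      | insert a s ha ih =>
        intro M hM
        have hMa : M a ∈ Submodule.span E (Set.range ρ) := h.1 ▸ trivial
        have key : ∀ X ∈ Submodule.span E (Set.range ρ), piKronMulti E k (Function.update M a X) ∈
            Submodule.span E (Set.range (powHom ρ k)) := by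
          intro X hX
          induction hX using Submodule.span_induction with
          | mem x hx =>
            apply ih
            intro i hi
            by_cases hia : i = a
            · subst hia; simpa using hx
            · rw [Function.update_of_ne hia]; exact hM i (by simp [hia, hi])
          | zero => rw [MultilinearMap.map_update_zero]; exact zero_mem _
          | add x y _ _ hx hy => rw [MultilinearMap.map_update_add]; exact add_mem hx hy
          | smul c x _ hx =>
            rw [MultilinearMap.map_update_smul]; exact Submodule.smul_mem _ _ hx
        have := key _ hMa
        rw [Function.update_eq_self] at this
        exact this
    rw [eq_top_iff]
    intro X _
    rw [Matrix.matrix_eq_sum_single X]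
    refine sum_mem fun f _ => sum_mem fun g _ => ?_
    have := h1 Finset.univ (fun i => Matrix.single (f i) (g i) 1) (by simp)
    have h2 : Matrix.single f g (X f g) =
        X f g • piKron (fun i => Matrix.single (f i) (g i) (1 : E)) := by
      ext f' g'
      simp only [piKron, Matrix.single_apply, Matrix.smul_apply, smul_eq_mul]
      by_cases hfg : f = f' ∧ g = g'
      · obtain ⟨rfl, rfl⟩ := hfg
        simp
      · rw [if_neg hfg]
        symm
        have : ∃ i, ¬ (f i = f' i ∧ g i = g' i) := by
          by_contra! h
          exact hfg ⟨funext fun i => (h i).1, funext fun i => (h i).2⟩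
        obtain ⟨i, hi⟩ := this
        rw [Finset.prod_eq_zero (Finset.mem_univ i) (by simp [hi]), mul_zero]
    rw [h2]
    exact Submodule.smul_mem _ _ this
  · have b := Module.finBasis F A
    rw [Module.finrank_eq_card_basis (Basis.piTensorProduct (fun _ : Fin k => b))]
    simp [← h.2, ← pow_mul, mul_comm]

end kron

end Amitsur

set_option linter.unusedSectionVars false
set_option linter.unusedSimpArgs false

namespace Amitsur

section descent
variable {K : Type*} [Field K] {G : Type*} [Group G] [Finite G]
  {ι : Type*} [Fintype ι] [DecidableEq ι]

theorem h90 (s : G →* (K →+* K)) (hs : Function.Injective s) (c : G → Matrix ι ι K)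
    (hc : ∀ σ τ, c σ * (s σ).mapMatrix (c τ) = c (σ * τ)) (hc1 : c 1 = 1) :
    ∃ P : (Matrix ι ι K)ˣ, ∀ σ, c σ * (s σ).mapMatrix (P : Matrix ι ι K) = P := by
  cases nonempty_fintype G
  let act : G → (ι → K) → (ι → K) := fun σ v => (c σ).mulVec (s σ ∘ v)
  have act_mul : ∀ σ τ v, act σ (act τ v) = act (σ * τ) v := by
    intro σ τ v
    simp only [act]
    have h0 : (s σ) ∘ (c τ).mulVec (s τ ∘ v) = ((c τ).map (s σ)).mulVec ((s σ) ∘ (s τ) ∘ v) := by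
      ext i
      exact RingHom.map_mulVec (s σ) (c τ) (s τ ∘ v) i
    rw [h0, ← hc, ← Matrix.mulVec_mulVec]
    have : (s σ) ∘ (s τ) ∘ v = (s (σ * τ)) ∘ v := by
      rw [map_mul]; rfl
    rw [this]; rfl
  have act_add : ∀ σ v w, act σ (v + w) = act σ v + act σ w := by
    intro σ v w
    simp only [act]
    rw [← Matrix.mulVec_add]
    congr 1
    ext i; simp
  have act_sum : ∀ σ (f : G → ι → K), act σ (∑ τ, f τ) = ∑ τ, act σ (f τ) := by
    intro σ f
    exact map_sum (AddMonoidHom.mk' (act σ) (act_add σ)) f Finset.univ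
  have act_smul : ∀ σ (l : K) v, act σ (l • v) = s σ l • act σ v := by
    intro σ l v
    simp only [act]
    rw [← Matrix.mulVec_smul]
    congr 1
    ext i; simp
  let W : Set (ι → K) := {v | ∀ σ, act σ v = v}
  have hT : ∀ v, (∑ τ, act τ v) ∈ W := by
    intro v σ
    rw [act_sum]
    simp only [act_mul]
    exact Fintype.sum_equiv (Equiv.mulLeft σ) _ _ (fun _ => rfl)
  have hspan : Submodule.span K W = ⊤ := by
    by_contra hne
    obtain ⟨ℓ, hℓ, hle⟩ := Submodule.exists_le_ker_of_lt_top _ (lt_top_iff_ne_top.2 hne)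
    apply hℓ
    ext1 i
    refine LinearMap.ext fun x => ?_
    set v : ι → K := LinearMap.single K (fun _ => K) i x
    have key : ∀ l : K, ∑ σ, s σ l * ℓ (act σ v) = 0 := by
      intro l
      have h1 : (∑ τ, act τ (l • v)) ∈ LinearMap.ker ℓ := hle (Submodule.subset_span (hT _))
      rw [LinearMap.mem_ker, map_sum] at h1
      simpa [act_smul] using h1
    have hli := linearIndependent_monoidHom K K
    let j : G → (K →* K) := fun σ => (s σ : K →* K)
    have hj : Function.Injective j := by
      intro σ τ h
      apply hs
      ext z
      exact DFunLike.congr_fun h z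
    have hli' := hli.comp j hj
    rw [Fintype.linearIndependent_iff] at hli'
    have := hli' (fun σ => ℓ (act σ v)) (by
      ext l
      simp only [Finset.sum_apply, Pi.smul_apply, smul_eq_mul, Pi.zero_apply, Function.comp]
      rw [← key l]
      exact Finset.sum_congr rfl fun σ _ => mul_comm _ _) 1
    have h1 : act 1 v = v := by
      simp [act, hc1]
    rw [h1] at this
    exact this
  obtain ⟨b, hbW, hbs, hbli⟩ := exists_linearIndependent K W
  rw [hspan] at hbs
  let B := Module.Basis.mk hbli (by simp [hbs])
  have : Finite b := Module.Finite.finite_basis B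
  cases nonempty_fintype b
  have hcard : Fintype.card b = Fintype.card ι := by
    rw [← Module.finrank_eq_card_basis B]; simp
  let e : ι ≃ b := Fintype.equivOfCardEq hcard.symm
  let w : ι → ι → K := fun j => (e j : ι → K)
  have hw : LinearIndependent K w := hbli.comp e e.injective
  have hu : IsUnit (Matrix.of w) := Matrix.linearIndependent_rows_iff_isUnit.1 hw
  have hu' : IsUnit (Matrix.of w).transpose := (Matrix.isUnit_transpose _).2 hu
  refine ⟨hu'.unit, fun σ => ?_⟩
  ext i j
  have : act σ (w j) = w j := hbW (e j).2 σ
  exact congrFun this i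

variable {F A N : Type*} [Field F] [Ring A] [Algebra F A] [Field N] [Algebra F N]
  [Algebra F K] [Algebra N K] [IsScalarTower F N K]

theorem descend (s : G →* (K →+* K)) (hs : Function.Injective s)
    (hN : ∀ z : K, (∀ σ, s σ z = z) → ∃ y, algebraMap N K y = z)
    (ρ : A →ₐ[F] Matrix ι ι K) (c : G → Matrix ι ι K)
    (hc : ∀ σ τ, c σ * (s σ).mapMatrix (c τ) = c (σ * τ)) (hc1 : c 1 = 1)
    (hρ : ∀ σ x, c σ * (s σ).mapMatrix (ρ x) = ρ x * c σ) :
    ∃ (ρ' : A →ₐ[F] Matrix ι ι N) (P : (Matrix ι ι K)ˣ),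
      ∀ x, (algebraMap N K).mapMatrix (ρ' x) = P⁻¹.1 * ρ x * P.1 := by
  obtain ⟨P, hP⟩ := h90 s hs c hc hc1
  let conj : A →ₐ[F] Matrix ι ι K := AlgHom.ofLinearMap
    { toFun := fun x => P⁻¹.1 * ρ x * P.1
      map_add' := fun x y => by simp [mul_add, add_mul]
      map_smul' := fun c x => by simp }
    (by simp) (fun x y => by simp [mul_assoc])
  have hconj : ∀ x, conj x = P⁻¹.1 * ρ x * P.1 := fun _ => rfl
  have hfix : ∀ x i j σ, s σ (conj x i j) = conj x i j := by
    intro x i j σ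
    have h0 : (s σ).mapMatrix (P⁻¹.1) * (s σ).mapMatrix P.1 = 1 := by
      rw [← map_mul]; simp
    have h1 : (s σ).mapMatrix (P⁻¹.1) = P⁻¹.1 * c σ := by
      have : (P⁻¹.1 * c σ) * (s σ).mapMatrix P.1 = 1 := by
        rw [mul_assoc, hP]; simp
      calc (s σ).mapMatrix (P⁻¹.1)
          = ((P⁻¹.1 * c σ) * (s σ).mapMatrix P.1) * (s σ).mapMatrix (P⁻¹.1) := by rw [this, one_mul]
        _ = (P⁻¹.1 * c σ) * ((s σ).mapMatrix P.1 * (s σ).mapMatrix (P⁻¹.1)) := by rw [mul_assoc]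
        _ = _ := by rw [← map_mul]; simp
    have h2 : (s σ).mapMatrix (conj x) = conj x := by
      rw [hconj, map_mul, map_mul, h1, mul_assoc P⁻¹.1, hρ, mul_assoc, mul_assoc (ρ x), hP,
        ← mul_assoc]
    exact congrFun (congrFun h2 i) j
  let m : Matrix ι ι N →ₐ[F] Matrix ι ι K := (IsScalarTower.toAlgHom F N K).mapMatrix
  have hm : Function.Injective m := by
    intro X Y h
    ext i j
    exact (algebraMap N K).injective (congrFun (congrFun h i) j)
  have hr : ∀ x, conj x ∈ m.range := by
    intro x
    choose y hy using fun i j => hN (conj x i j) (hfix x i j)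
    exact ⟨y, by ext i j; exact hy i j⟩
  refine ⟨((AlgEquiv.ofInjective m hm).symm : m.range →ₐ[F] _).comp (conj.codRestrict _ hr), P, ?_⟩
  intro x
  have := AlgEquiv.apply_symm_apply (AlgEquiv.ofInjective m hm) (conj.codRestrict _ hr x)
  have := congrArg Subtype.val this
  exact this

end descent
end Amitsur

set_option linter.unusedSectionVars false
set_option linter.unusedSimpArgs false

namespace Amitsur

section cocycle
variable {K : Type*} [Field K] {G : Type*} [Group G]
  {ι κ : Type*} [Fintype ι] [DecidableEq ι] [Fintype κ] [DecidableEq κ]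
variable {F A A' : Type*} [Field F] [Ring A] [Algebra F A] [Ring A'] [Algebra F A']
  [Algebra F K]

/-- A family of matrices intertwining a representation with its conjugates, with factor set `a`. -/
structure Coc (s : G →* (K →+* K)) (ρ : A →ₐ[F] Matrix ι ι K) (c : G → (Matrix ι ι K)ˣ)
    (a : G → G → Kˣ) : Prop where
  one : c 1 = 1
  mul : ∀ σ τ, (c σ).1 * (s σ).mapMatrix (c τ).1 = (a σ τ : K) • (c (σ * τ)).1
  comm : ∀ σ x, (c σ).1 * (s σ).mapMatrix (ρ x) = ρ x * (c σ).1

variable {s : G →* (K →+* K)} {ρ : A →ₐ[F] Matrix ι ι K} {c : G → (Matrix ι ι K)ˣ}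
    {a : G → G → Kˣ} {ρ' : A' →ₐ[F] Matrix κ κ K} {c' : G → (Matrix κ κ K)ˣ}
    {a' : G → G → Kˣ}

/-- Kronecker product of units -/
noncomputable def kronUnit (X : (Matrix ι ι K)ˣ) (Y : (Matrix κ κ K)ˣ) :
    (Matrix (ι × κ) (ι × κ) K)ˣ where
  val := Matrix.kroneckerMap (· * ·) X.1 Y.1
  inv := Matrix.kroneckerMap (· * ·) X⁻¹.1 Y⁻¹.1
  val_inv := by rw [← Matrix.mul_kronecker_mul]; simp
  inv_val := by rw [← Matrix.mul_kronecker_mul]; simp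

theorem map_kron (f : K →+* K) (X : Matrix ι ι K) (Y : Matrix κ κ K) :
    f.mapMatrix (Matrix.kroneckerMap (· * ·) X Y) =
      Matrix.kroneckerMap (· * ·) (f.mapMatrix X) (f.mapMatrix Y) := by
  ext i j
  simp

open scoped Kronecker in
theorem Coc.kron (h : Coc s ρ c a) (h' : Coc s ρ' c' a') :
    Coc s (kronHom ρ ρ') (fun σ => kronUnit (c σ) (c' σ)) (fun σ τ => a σ τ * a' σ τ) where
  one := by
    ext1
    simp [kronUnit, h.one, h'.one]
  mul σ τ := by
    change (_ ⊗ₖ _) * (s σ).mapMatrix (_ ⊗ₖ _) = _ • (_ ⊗ₖ _)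
    rw [map_kron, ← Matrix.mul_kronecker_mul, h.mul, h'.mul, Matrix.smul_kronecker,
      Matrix.kronecker_smul, smul_smul]
    simp
  comm σ x := by
    change (_ ⊗ₖ _) * (s σ).mapMatrix _ = _ * (_ ⊗ₖ _)
    induction x with
    | zero => simp
    | add x y hx hy => rw [map_add, map_add, mul_add, add_mul, hx, hy]
    | tmul x y =>
      rw [kronHom_tmul, map_kron, ← Matrix.mul_kronecker_mul, h.comm, h'.comm,
        Matrix.mul_kronecker_mul]

/-- transpose inverse -/
noncomputable def tinv (X : (Matrix ι ι K)ˣ) : (Matrix ι ι K)ˣ where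
  val := X⁻¹.1.transpose
  inv := X.1.transpose
  val_inv := by rw [← Matrix.transpose_mul]; simp
  inv_val := by rw [← Matrix.transpose_mul]; simp

theorem map_transpose (f : K →+* K) (X : Matrix ι ι K) :
    f.mapMatrix X.transpose = (f.mapMatrix X).transpose := rfl

theorem Coc.op (h : Coc s ρ c a) :
    Coc s (opHom ρ) (fun σ => tinv (c σ)) (fun σ τ => (a σ τ)⁻¹) where
  one := by
    ext1
    simp [tinv, h.one]
  mul σ τ := by
    simp only [tinv]
    rw [map_transpose, ← Matrix.transpose_mul, ← Matrix.transpose_smul]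
    congr 1
    have h1 : ((s σ).mapMatrix (c τ)⁻¹.1 * (c σ)⁻¹.1) * ((c σ).1 * (s σ).mapMatrix (c τ).1) = 1 := by
      rw [mul_assoc, ← mul_assoc (c σ)⁻¹.1, Units.inv_mul, one_mul, ← map_mul, Units.inv_mul,
        map_one]
    rw [h.mul, mul_smul_comm] at h1
    have h2 := congrArg (fun X => (((a σ τ)⁻¹ : Kˣ) : K) • (X * (c (σ * τ))⁻¹.1)) h1
    simpa [mul_assoc, smul_smul] using h2
  comm σ x := by
    simp only [tinv, opHom_apply]
    rw [map_transpose, ← Matrix.transpose_mul, ← Matrix.transpose_mul]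
    congr 1
    rw [Units.eq_inv_mul_iff_mul_eq, ← mul_assoc, h.comm, mul_assoc]
    simp

/-- Kronecker power of a unit -/
noncomputable def powUnit (X : (Matrix ι ι K)ˣ) (k : ℕ) :
    (Matrix (Fin k → ι) (Fin k → ι) K)ˣ where
  val := piKron (fun _ => X.1)
  inv := piKron (fun _ => X⁻¹.1)
  val_inv := by rw [piKron_mul]; simp [piKron_one]
  inv_val := by rw [piKron_mul]; simp [piKron_one]

theorem map_piKron (f : K →+* K) {k : ℕ} (M : Fin k → Matrix ι ι K) :
    f.mapMatrix (piKron M) = piKron (fun i => f.mapMatrix (M i)) := by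
  ext i j
  simp [piKron]

theorem Coc.pow (hsF : ∀ σ r, s σ (algebraMap F K r) = algebraMap F K r)
    (h : Coc s ρ c a) (k : ℕ) :
    Coc s (powHom ρ k) (fun σ => powUnit (c σ) k) (fun σ τ => (a σ τ) ^ k) where
  one := by
    ext1
    simp [powUnit, h.one, piKron_one]
  mul σ τ := by
    simp only [powUnit]
    rw [map_piKron, piKron_mul, Units.val_pow_eq_pow_val, ← piKron_smul]
    simp only [h.mul]
  comm σ x := by
    simp only [powUnit]
    induction x using PiTensorProduct.induction_on with
    | smul_tprod r x =>
      have h1 : ∀ X : Matrix (Fin k → ι) (Fin k → ι) K,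
          (s σ).mapMatrix (r • X) = r • (s σ).mapMatrix X := by
        intro X
        ext i j
        change s σ (r • X i j) = r • s σ (X i j)
        rw [Algebra.smul_def, Algebra.smul_def, map_mul, hsF]
      rw [map_smul, h1, mul_smul_comm, smul_mul_assoc, powHom_tprod, map_piKron, piKron_mul,
        piKron_mul]
      simp only [h.comm]
    | add x y hx hy => rw [map_add, map_add, mul_add, add_mul, hx, hy]

theorem Coc.smul (h : Coc s ρ c a) (e : G → Kˣ) (he : e 1 = 1) {a' : G → G → Kˣ}
    (ha' : ∀ σ τ, (a' σ τ : K) * e (σ * τ) = a σ τ * e σ * s σ (e τ)) :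
    Coc s ρ (fun σ => e σ • c σ) a' where
  one := by simp [he, h.one]
  mul σ τ := by
    simp only [Units.val_smul, Units.smul_def]
    have h1 : ∀ (l : K) (X : Matrix ι ι K),
        (s σ).mapMatrix (l • X) = s σ l • (s σ).mapMatrix X := by
      intro l X
      ext i j
      simp
    rw [h1, mul_smul_comm, smul_mul_assoc, h.mul, smul_smul, smul_smul, smul_smul, ha']
    congr 1
    ring
  comm σ x := by
    simp only [Units.val_smul, Units.smul_def]
    rw [mul_smul_comm, smul_mul_assoc, h.comm]

theorem Coc.a_one [Nonempty ι] (h : Coc s ρ c a) : a 1 1 = 1 := by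
  have := h.mul 1 1
  simp [h.one] at this
  have := congrFun (congrFun this (Classical.arbitrary ι)) (Classical.arbitrary ι)
  simp at this
  exact Units.ext this.symm

theorem Coc.descend [Finite G] {N : Type*} [Field N] [Algebra F N] [Algebra N K]
    [IsScalarTower F N K] (hs : Function.Injective s)
    (hN : ∀ z : K, (∀ σ, s σ z = z) → ∃ y, algebraMap N K y = z) (h : Coc s ρ c 1) :
    ∃ (ρ' : A →ₐ[F] Matrix ι ι N) (P : (Matrix ι ι K)ˣ),
      ∀ x, (algebraMap N K).mapMatrix (ρ' x) = P⁻¹.1 * ρ x * P.1 :=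
  Amitsur.descend s hs hN ρ (fun σ => (c σ).1) (fun σ τ => by simpa using h.mul σ τ)
    (by simp [h.one]) h.comm

theorem Coc.equiv [Finite G] (hs : Function.Injective s) [FiniteDimensional F A]
    (hN : ∀ z : K, (∀ σ, s σ z = z) → ∃ y, algebraMap F K y = z) (h : Coc s ρ c 1)
    (hρ : Full ρ) : Nonempty (A ≃ₐ[F] Matrix ι ι F) := by
  obtain ⟨ρ', P, hP⟩ := h.descend (N := F) hs hN
  refine ⟨AlgEquiv.ofBijective ρ' ?_⟩
  have hinj : Function.Injective ρ'.toLinearMap := by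
    intro x y hxy
    have hxy : ρ' x = ρ' y := hxy
    have h1 := hP x
    rw [hxy, hP y] at h1
    have h2 := congrArg (fun X => P.1 * X * P⁻¹.1) h1
    simp [mul_assoc] at h2
    exact (hρ.injective h2).symm
  exact ⟨hinj, (LinearMap.injective_iff_surjective_of_finrank_eq_finrank
    (by simp [Module.finrank_matrix, ← hρ.2, sq])).1 hinj⟩

end cocycle

section brauer
variable {K : Type*} [Field K] {G : Type*} [Group G] [Finite G]
  {ι κ : Type*} [Fintype ι] [DecidableEq ι] [Fintype κ] [DecidableEq κ]
variable {F A A' : Type u} [Field F] [Ring A] [Algebra F A] [Ring A'] [Algebra F A']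
  [Algebra F K] [FiniteDimensional F A] [FiniteDimensional F A']
variable {s : G →* (K →+* K)} {ρ : A →ₐ[F] Matrix ι ι K} {c : G → (Matrix ι ι K)ˣ}
    {a : G → G → Kˣ} {ρ' : A' →ₐ[F] Matrix κ κ K} {c' : G → (Matrix κ κ K)ˣ}
    {a' : G → G → Kˣ}

theorem brauerEquiv_of_coc [Nonempty ι] [Nonempty κ] (hs : Function.Injective s)
    (hN : ∀ z : K, (∀ σ, s σ z = z) → ∃ y, algebraMap F K y = z)
    (hρ : Full ρ) (hρ' : Full ρ') (h : Coc s ρ c a) (h' : Coc s ρ' c' a')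
    (e : G → Kˣ) (he : ∀ σ τ, (a σ τ : K) * e (σ * τ) = a' σ τ * (e σ * s σ (e τ))) :
    BrauerEquiv F A A' := by
  have he1 : e 1 = 1 := by
    have := he 1 1
    simp [h.a_one, h'.a_one] at this
    exact_mod_cast this
  have h1 : Coc s (kronHom ρ (opHom ρ')) _ 1 :=
    (h.kron h'.op).smul (fun σ => (e σ)⁻¹) (by simp [he1]) (a' := 1) (by
      intro σ τ
      have h1 := he σ τ
      have h2 : s σ (e τ : K) ≠ 0 := (map_ne_zero _).2 (Units.ne_zero _)
      simp only [Pi.one_apply, Units.val_one, Units.val_mul, Units.val_inv_eq_inv_val, map_inv₀]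
      have h3 : (a σ τ : K) = a' σ τ * (e σ * s σ (e τ)) / e (σ * τ) := by
        rw [← h1]; simp
      rw [h3]
      field_simp)
  have h2 : Coc s (kronHom (opHom ρ') ρ') _ 1 :=
    (h'.op.kron h').smul 1 (by simp) (a' := 1) (by simp)
  have : FiniteDimensional F A'ᵐᵒᵖ := Module.Finite.equiv (MulOpposite.opLinearEquiv F)
  obtain ⟨e1⟩ := h1.equiv hs hN (hρ.kron hρ'.op)
  obtain ⟨e2⟩ := h2.equiv hs hN (hρ'.op.kron hρ')
  refine ⟨Fintype.card (κ × κ), Fintype.card (ι × κ), Fintype.card_pos, Fintype.card_pos, ⟨?_⟩⟩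
  refine (Matrix.reindexAlgEquiv F A (Fintype.equivFin _).symm).trans ?_
  refine AlgEquiv.trans ?_ (Matrix.reindexAlgEquiv F A' (Fintype.equivFin _))
  refine (matrixEquivTensor (κ × κ) F A).trans ?_
  refine AlgEquiv.trans ?_ (matrixEquivTensor (ι × κ) F A').symm
  refine (Algebra.TensorProduct.congr AlgEquiv.refl e2.symm).trans ?_
  refine (Algebra.TensorProduct.assoc F F F A A'ᵐᵒᵖ A').symm.trans ?_
  refine (Algebra.TensorProduct.congr e1 AlgEquiv.refl).trans ?_
  exact Algebra.TensorProduct.comm F _ _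

end brauer

section galois
variable {F A L : Type*} [Field F] [Ring A] [Algebra F A] [Field L] [Algebra F L]
  {ι : Type*} [Fintype ι] [DecidableEq ι]

/-- the Galois action as a homomorphism to ring endomorphisms -/
def gal (F L : Type*) [Field F] [Field L] [Algebra F L] : (L ≃ₐ[F] L) →* (L →+* L) where
  toFun σ := (σ : L →+* L)
  map_one' := rfl
  map_mul' _ _ := rfl

@[simp] theorem gal_apply (σ : L ≃ₐ[F] L) (x : L) : gal F L σ x = σ x := rfl

theorem gal_injective : Function.Injective (gal F L) := by
  intro σ τ h
  ext x
  exact DFunLike.congr_fun h x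

theorem gal_fixed [FiniteDimensional F L] [IsGalois F L] (z : L) (h : ∀ σ, gal F L σ z = z) :
    ∃ y, algebraMap F L y = z :=
  (IsGalois.mem_range_algebraMap_iff_fixed z).2 h

theorem exists_coc [Algebra.IsCentral F A] [IsSimpleRing A] [FiniteDimensional F A] [Nonempty ι]
    (ρ : A →ₐ[F] Matrix ι ι L) (h : Fintype.card ι ^ 2 = Module.finrank F A) :
    ∃ c a, Coc (gal F L) ρ c a := by
  have hρ := full_of_csa ρ h
  have h1 : ∀ σ : L ≃ₐ[F] L, ∃ P : (Matrix ι ι L)ˣ, (σ = 1 → P = 1) ∧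
      ∀ x, P.1 * (gal F L σ).mapMatrix (ρ x) = ρ x * P.1 := by
    intro σ
    by_cases hσ : σ = 1
    · subst hσ
      exact ⟨1, fun _ => rfl, fun x => by simp⟩
    · obtain ⟨P, hP⟩ := skolem_noether (full_of_csa ((σ : L →ₐ[F] L).mapMatrix.comp ρ) h) hρ
      exact ⟨P, fun h => absurd h hσ, fun x => (hP x).symm⟩
  choose c hc1 hc using h1
  have h2 : ∀ σ τ, ∃ u : Lˣ,
      (c σ).1 * (gal F L σ).mapMatrix (c τ).1 = (u : L) • (c (σ * τ)).1 := by
    intro σ τ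
    set X : (Matrix ι ι L)ˣ :=
      c σ * Units.map ((gal F L σ).mapMatrix : Matrix ι ι L →+* Matrix ι ι L).toMonoidHom (c τ)
    have hX : ∀ x, X.1 * (gal F L (σ * τ)).mapMatrix (ρ x) = ρ x * X.1 := by
      intro x
      have h3 : (gal F L (σ * τ)).mapMatrix (ρ x) =
        (gal F L σ).mapMatrix ((gal F L τ).mapMatrix (ρ x)) := rfl
      rw [h3]
      change (c σ).1 * (gal F L σ).mapMatrix (c τ).1 * _ =
        ρ x * ((c σ).1 * (gal F L σ).mapMatrix (c τ).1)
      rw [mul_assoc, ← map_mul, hc, map_mul, ← mul_assoc, hc, mul_assoc]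
    obtain ⟨z, hz⟩ := hρ.commutant (M := X.1 * (c (σ * τ))⁻¹.1) (by
      intro x
      have h4 : (c (σ * τ))⁻¹.1 * ρ x = (gal F L (σ * τ)).mapMatrix (ρ x) * (c (σ * τ))⁻¹.1 := by
        rw [Units.inv_mul_eq_iff_eq_mul, ← mul_assoc, hc, mul_assoc]
        simp
      rw [mul_assoc, h4, ← mul_assoc, hX, mul_assoc])
    have hz0 : z ≠ 0 := by
      rintro rfl
      rw [zero_smul] at hz
      have := (X * (c (σ * τ))⁻¹).ne_zero
      exact this hz
    refine ⟨Units.mk0 z hz0, ?_⟩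
    change X.1 = z • _
    have := congrArg (fun Y => Y * (c (σ * τ)).1) hz
    simpa [mul_assoc] using this
  choose a ha using h2
  exact ⟨c, a, ⟨hc1 1 rfl, ha, hc⟩⟩

end galois
end Amitsur

set_option linter.unusedSectionVars false
set_option linter.unusedSimpArgs false

namespace Amitsur

section split

theorem central_of_matrix {k D : Type u} [Field k] [DivisionRing D] [Algebra k D] {n : ℕ} [NeZero n]
    (h : Algebra.IsCentral k (Matrix (Fin n) (Fin n) D)) : Algebra.IsCentral k D := by
  have : Algebra.IsCentral k (D ⊗[k] Matrix (Fin n) (Fin n) k) :=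
    Algebra.IsCentral.of_algEquiv k _ _ (matrixEquivTensor (Fin n) k D)
  exact Algebra.IsCentral.left_of_tensor_of_field k D (Matrix (Fin n) (Fin n) k)

theorem sepClosed_central {k D : Type*} [Field k] [IsSepClosed k] [DivisionRing D] [Algebra k D]
    [FiniteDimensional k D] [Algebra.IsCentral k D] : (⊥ : Subalgebra k D) = ⊤ := by
  by_contra hne
  obtain ⟨x, hx, hsep⟩ := JacobsonNoether.exists_separable_and_not_isCentral' hne
  apply hx
  have hxint : IsIntegral k x := Algebra.IsIntegral.isIntegral x
  have h1 := IsSepClosed.degree_eq_one_of_irreducible k (minpoly.irreducible hxint) hsep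
  have := (minpoly.degree_eq_one_iff).1 h1
  obtain ⟨y, hy⟩ := this
  exact Algebra.mem_bot.2 ⟨y, hy⟩

variable {F A : Type u} [Field F] [Ring A] [Algebra F A]
  [Algebra.IsCentral F A] [IsSimpleRing A] [FiniteDimensional F A]

theorem spl_sepClosed (K : Type u) [Field K] [Algebra F K] [IsSepClosed K] : Spl F A K := by
  apply spl_of_isSplit
  have h1 : IsSimpleRing (K ⊗[F] A) := baseChange_simple
  have h2 : Algebra.IsCentral K (K ⊗[F] A) := baseChange_central
  have := IsArtinianRing.of_finite K (K ⊗[F] A)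
  obtain ⟨n, hn, D, _, _, _, ⟨e⟩⟩ :=
    IsSimpleRing.exists_algEquiv_matrix_divisionRing_finite K (K ⊗[F] A)
  have h3 : Algebra.IsCentral K D := central_of_matrix (Algebra.IsCentral.of_algEquiv K _ _ e)
  have h4 := sepClosed_central (k := K) (D := D)
  refine ⟨n, Nat.pos_of_ne_zero hn.out, ⟨e.trans (AlgEquiv.mapMatrix ?_)⟩⟩
  exact ((Subalgebra.topEquiv.symm).trans (Subalgebra.equivOfEq _ _ h4.symm)).trans
    (Algebra.botEquiv K D)

theorem restrict_entries {F A N K ι : Type*} [Field F] [Ring A] [Algebra F A] [Field N]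
    [Algebra F N] [Field K] [Algebra F K] [Algebra N K] [IsScalarTower F N K]
    [Fintype ι] [DecidableEq ι] (ρ : A →ₐ[F] Matrix ι ι K)
    (h : ∀ x i j, ∃ y, algebraMap N K y = ρ x i j) :
    ∃ ρ' : A →ₐ[F] Matrix ι ι N, ∀ x, (algebraMap N K).mapMatrix (ρ' x) = ρ x := by
  let m : Matrix ι ι N →ₐ[F] Matrix ι ι K := (IsScalarTower.toAlgHom F N K).mapMatrix
  have hm : Function.Injective m := by
    intro X Y h
    ext i j
    exact (algebraMap N K).injective (congrFun (congrFun h i) j)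
  have hr : ∀ x, ρ x ∈ m.range := by
    intro x
    choose y hy using h x
    exact ⟨y, by ext i j; exact hy i j⟩
  refine ⟨((AlgEquiv.ofInjective m hm).symm : m.range →ₐ[F] _).comp (ρ.codRestrict _ hr), ?_⟩
  intro x
  have := AlgEquiv.apply_symm_apply (AlgEquiv.ofInjective m hm) (ρ.codRestrict _ hr x)
  exact congrArg Subtype.val this

theorem entries_mem {F A K ι : Type*} [Field F] [Ring A] [Algebra F A] [Field K] [Algebra F K]
    [FiniteDimensional F A] [Fintype ι] [DecidableEq ι] (ρ : A →ₐ[F] Matrix ι ι K)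
    (L : IntermediateField F K) (h : ∀ t i j, ρ (Module.finBasis F A t) i j ∈ L) :
    ∀ x i j, ρ x i j ∈ L := by
  intro x i j
  have hx : x ∈ Submodule.span F (Set.range (Module.finBasis F A)) := by
    rw [Module.Basis.span_eq]; trivial
  induction hx using Submodule.span_induction with
  | mem x hx => obtain ⟨t, rfl⟩ := hx; exact h t i j
  | zero => simp
  | add x y _ _ hx hy => rw [map_add]; exact add_mem hx hy
  | smul c x _ hx => rw [map_smul]; exact L.smul_mem hx

theorem spl_restrict {F A K : Type*} [Field F] [Ring A] [Algebra F A] [Field K] [Algebra F K]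
    [FiniteDimensional F A] {n : ℕ} (ρ : A →ₐ[F] Matrix (Fin n) (Fin n) K)
    (hn : n ^ 2 = Module.finrank F A)
    (L : IntermediateField F K) (h : ∀ t i j, ρ (Module.finBasis F A t) i j ∈ L) :
    Spl F A L := by
  obtain ⟨ρ', -⟩ := restrict_entries (N := L) ρ
    (fun x i j => ⟨⟨ρ x i j, entries_mem ρ L h x i j⟩, rfl⟩)
  exact ⟨n, hn, ⟨ρ'⟩⟩

theorem exists_galois_splitting {B : Type u} [Ring B] [Algebra F B]
    [Algebra.IsCentral F B] [IsSimpleRing B] [FiniteDimensional F B] :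
    ∃ (L : Type u) (_ : Field L) (_ : Algebra F L), FiniteDimensional F L ∧ IsGalois F L ∧
      Spl F A L ∧ Spl F B L := by
  let K := SeparableClosure F
  obtain ⟨n, hn, ⟨ρ⟩⟩ := spl_sepClosed (F := F) (A := A) K
  obtain ⟨m, hm, ⟨θ⟩⟩ := spl_sepClosed (F := F) (A := B) K
  let S1 : Set K := Set.range fun p : Fin (Module.finrank F A) × Fin n × Fin n =>
    ρ (Module.finBasis F A p.1) p.2.1 p.2.2
  let S2 : Set K := Set.range fun p : Fin (Module.finrank F B) × Fin m × Fin m =>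
    θ (Module.finBasis F B p.1) p.2.1 p.2.2
  let L := FiniteGaloisIntermediateField.adjoin F (S1 ∪ S2)
  have hL : ∀ x ∈ S1 ∪ S2, x ∈ L.toIntermediateField := fun x hx =>
    FiniteGaloisIntermediateField.subset_adjoin F _ hx
  refine ⟨L, inferInstance, inferInstance, inferInstance, inferInstance, ?_, ?_⟩
  · exact spl_restrict ρ hn _ fun t i j => hL _ (Or.inl ⟨(t, i, j), rfl⟩)
  · exact spl_restrict θ hm _ fun t i j => hL _ (Or.inr ⟨(t, i, j), rfl⟩)

end split
end Amitsur

set_option linter.unusedSectionVars false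
set_option linter.unusedSimpArgs false

namespace Amitsur

section hat
open MvPolynomial
variable {L : Type*} [Field L] {ι : Type*} [Fintype ι] [DecidableEq ι]

/-- The semilinear substitution: coefficients by `φ`, variables by the matrix `M`. -/
noncomputable def hat (φ : L →+* L) (M : Matrix ι ι L) : MvPolynomial ι L →+* MvPolynomial ι L :=
  eval₂Hom (C.comp φ) (fun j => ∑ i, C (M i j) * X i)

@[simp] theorem hat_C (φ : L →+* L) (M : Matrix ι ι L) (l : L) : hat φ M (C l) = C (φ l) := by
  simp [hat]

@[simp] theorem hat_X (φ : L →+* L) (M : Matrix ι ι L) (j : ι) :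
    hat φ M (X j) = ∑ i, C (M i j) * X i := by
  simp [hat]

theorem hat_hat (φ ψ : L →+* L) (M M' : Matrix ι ι L) (f : MvPolynomial ι L) :
    hat φ M (hat ψ M' f) = hat (φ.comp ψ) (M * φ.mapMatrix M') f := by
  have : (hat φ M).comp (hat ψ M') = hat (φ.comp ψ) (M * φ.mapMatrix M') := by
    apply MvPolynomial.ringHom_ext
    · intro r; simp
    · intro j
      simp only [RingHom.comp_apply, hat_X, map_sum, map_mul, hat_C, Matrix.mul_apply,
        RingHom.mapMatrix_apply, Matrix.map_apply, Finset.mul_sum, Finset.sum_mul]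
      rw [Finset.sum_comm]
      refine Finset.sum_congr rfl fun k _ => Finset.sum_congr rfl fun i _ => ?_
      ring
  exact DFunLike.congr_fun this f

theorem hat_one (f : MvPolynomial ι L) : hat (RingHom.id L) 1 f = f := by
  have : hat (RingHom.id L) (1 : Matrix ι ι L) = RingHom.id _ := by
    apply MvPolynomial.ringHom_ext
    · intro r; simp
    · intro j
      simp [Matrix.one_apply]
  exact DFunLike.congr_fun this f

theorem hat_homog (φ : L →+* L) (M : Matrix ι ι L) {f : MvPolynomial ι L} {d : ℕ}
    (hf : f.IsHomogeneous d) : (hat φ M f).IsHomogeneous d := by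
  have := hf.eval₂ (C.comp φ) (fun j => ∑ i, C (M i j) * X i) (n := 1)
    (fun r => isHomogeneous_C _ _)
    (fun j => IsHomogeneous.sum _ _ _ fun i _ => isHomogeneous_C_mul_X _ _)
  rw [one_mul] at this
  exact this

theorem hat_smul (φ : L →+* L) (M : Matrix ι ι L) (a : L) {f : MvPolynomial ι L} {d : ℕ}
    (hf : f.IsHomogeneous d) : hat φ (a • M) f = C (a ^ d) * hat φ M f := by
  simp only [hat, coe_eval₂Hom, eval₂_eq, Finset.mul_sum]
  refine Finset.sum_congr rfl fun m hm => ?_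
  have hd : ∑ i ∈ m.support, m i = d := by
    have := hf (mem_support_iff.1 hm)
    rw [Finsupp.weight_apply] at this
    simpa [Finsupp.sum] using this
  have h1 : ∀ j, ∑ i, C ((a • M) i j) * X i = C a * ∑ i, C (M i j) * (X i : MvPolynomial ι L) := by
    intro j
    rw [Finset.mul_sum]
    refine Finset.sum_congr rfl fun i _ => ?_
    simp [mul_assoc]
  simp only [h1, mul_pow, Finset.prod_mul_distrib]
  rw [Finset.prod_pow_eq_pow_sum, hd, C_pow]
  ring

variable {G : Type*} [Group G] {s : G →* (L →+* L)} {c : G → (Matrix ι ι L)ˣ} {a : G → G → Lˣ}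

theorem hat_c_mul (hmul : ∀ σ τ, (c σ).1 * (s σ).mapMatrix (c τ).1 = (a σ τ : L) • (c (σ * τ)).1)
    (σ τ : G) {f : MvPolynomial ι L} {d : ℕ} (hf : f.IsHomogeneous d) :
    hat (s σ) (c σ).1 (hat (s τ) (c τ).1 f) =
      C ((a σ τ : L) ^ d) * hat (s (σ * τ)) (c (σ * τ)).1 f := by
  rw [hat_hat, hmul, hat_smul _ _ _ hf, map_mul]
  rfl

/-- `hat` as an automorphism -/
noncomputable def hatE (s : G →* (L →+* L)) (σ : G) (M : (Matrix ι ι L)ˣ) :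
    MvPolynomial ι L ≃+* MvPolynomial ι L where
  __ := hat (s σ) M.1
  invFun := hat (s σ⁻¹) ((s σ⁻¹).mapMatrix M⁻¹.1)
  left_inv f := by
    change hat _ _ (hat _ _ f) = f
    rw [hat_hat, ← map_mul]
    have h1 : (s σ⁻¹).comp (s σ) = RingHom.id L := by
      change s σ⁻¹ * s σ = 1
      rw [← map_mul]; simp
    rw [h1]
    simp [hat_one]
  right_inv f := by
    change hat _ _ (hat _ _ f) = f
    have h1 : (s σ).comp (s σ⁻¹) = RingHom.id L := by
      change s σ * s σ⁻¹ = 1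
      rw [← map_mul]; simp
    have h2 : (s σ).mapMatrix ((s σ⁻¹).mapMatrix M⁻¹.1) = M⁻¹.1 := by
      ext i j
      exact DFunLike.congr_fun h1 (M⁻¹.1 i j)
    rw [hat_hat, h1, h2]
    simp [hat_one]

@[simp] theorem hatE_apply (s : G →* (L →+* L)) (σ : G) (M : (Matrix ι ι L)ˣ)
    (f : MvPolynomial ι L) : hatE s σ M f = hat (s σ) M.1 f := rfl

theorem gcd_step [Fintype G] (p : G → MvPolynomial ι L) (hp : ∀ σ, p σ ≠ 0) :
    ∃ g : MvPolynomial ι L, g ≠ 0 ∧ ∀ (φ : MvPolynomial ι L ≃+* MvPolynomial ι L)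
      (r t : MvPolynomial ι L) (π : G ≃ G) (b : G → MvPolynomial ι L), (∀ τ, IsUnit (b τ)) →
      (∀ τ, b τ * p (π τ) * t = r * φ (p τ)) → Associated (r * φ g) (t * g) := by
  classical
  obtain ⟨_⟩ : Nonempty (NormalizedGCDMonoid (MvPolynomial ι L)) := inferInstance
  refine ⟨Finset.univ.gcd p, ?_, ?_⟩
  · intro h
    rw [Finset.gcd_eq_zero_iff] at h
    exact hp 1 (h 1 (Finset.mem_univ _))
  · intro φ r t π b hb h
    have h1 : Associated (φ (Finset.univ.gcd p)) (Finset.univ.gcd fun τ => φ (p τ)) := by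
      apply associated_of_dvd_dvd
      · exact Finset.dvd_gcd fun τ _ => map_dvd φ (Finset.gcd_dvd (Finset.mem_univ τ))
      · have : φ.symm (Finset.univ.gcd fun τ => φ (p τ)) ∣ Finset.univ.gcd p := by
          refine Finset.dvd_gcd fun τ _ => ?_
          have := map_dvd φ.symm (Finset.gcd_dvd (f := fun τ => φ (p τ)) (Finset.mem_univ τ))
          simpa using this
        simpa using map_dvd φ this
    refine (h1.mul_left r).trans ?_
    refine (Finset.gcd_mul_left' (s := Finset.univ) (f := fun τ => φ (p τ)) r).symm.trans ?_
    refine Associated.trans ?_ (Finset.gcd_mul_left' (s := Finset.univ) (f := p) t)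
    apply associated_of_dvd_dvd
    · refine Finset.dvd_gcd fun τ _ => ?_
      refine (Finset.gcd_dvd (f := fun τ => r * φ (p τ)) (Finset.mem_univ (π.symm τ))).trans ?_
      rw [← h, Equiv.apply_symm_apply, mul_assoc, (hb _).mul_left_dvd, mul_comm]
    · refine Finset.dvd_gcd fun τ _ => ?_
      refine (Finset.gcd_dvd (f := fun τ => t * p τ) (Finset.mem_univ (π τ))).trans ?_
      rw [← h, mul_assoc]
      exact Dvd.intro_left (b τ) (by rw [mul_comm t])

theorem homog_comp_sum {δ : ℕ} (m : ℕ) (h : ℕ → MvPolynomial ι L)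
    (hh : ∀ i, (h i).IsHomogeneous (δ + i)) (d : ℕ) (hd : d < m) :
    homogeneousComponent (δ + d) (∑ i ∈ Finset.range m, h i) = h d := by
  rw [map_sum, Finset.sum_eq_single d]
  · exact homogeneousComponent_eq_self (hh d)
  · intro i _ hi
    rw [homogeneousComponent_of_mem (hh i), if_neg (by omega)]
  · intro h; simp [hd] at h

/-- The key unique factorization step. -/
theorem ufd_step [Finite G]
    (hmul : ∀ σ τ, (c σ).1 * (s σ).mapMatrix (c τ).1 = (a σ τ : L) • (c (σ * τ)).1)
    (b : G → G → Lˣ) {δ : ℕ} (p : G → MvPolynomial ι L) (q : MvPolynomial ι L)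
    (hp : ∀ σ, p σ ≠ 0) (hq : q ≠ 0) (hpδ : ∀ σ, (p σ).IsHomogeneous δ)
    (hqδ : q.IsHomogeneous δ)
    (hb : ∀ σ τ, C (b σ τ : L) * p (σ * τ) * hat (s σ) (c σ).1 q =
      p σ * hat (s σ) (c σ).1 (p τ)) :
    ∃ (d : ℕ) (e : G → Lˣ), ∀ σ τ,
      (b σ τ : L) * (a σ τ : L) ^ d * e (σ * τ) = (a σ τ : L) ^ δ * (e σ * s σ (e τ)) := by
  classical
  cases nonempty_fintype G
  obtain ⟨g, hg0, hg⟩ := gcd_step p hp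
  have h1 : ∀ σ, ∃ e : Lˣ, p σ * hat (s σ) (c σ).1 g = C (e : L) * (hat (s σ) (c σ).1 q * g) := by
    intro σ
    obtain ⟨u, hu⟩ := hg (hatE s σ (c σ)) (p σ) (hat (s σ) (c σ).1 q) (Equiv.mulLeft σ)
      (fun τ => C (b σ τ : L)) (fun τ => (Units.isUnit _).map C) (fun τ => hb σ τ)
    obtain ⟨e, he, he'⟩ := isUnit_iff_eq_C_of_isReduced.1 (u⁻¹).isUnit
    refine ⟨he.unit, ?_⟩
    rw [← hu, IsUnit.unit_spec, ← he', mul_comm, mul_comm (_ * _) u.1, Units.inv_mul_cancel_left, mul_comm]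
    rfl
  choose e he using h1
  obtain ⟨d, hd⟩ : ∃ d, homogeneousComponent d g ≠ 0 := by
    by_contra! h
    apply hg0
    rw [← sum_homogeneousComponent g]
    simp [h]
  have hdm : d < g.totalDegree + 1 := by
    by_contra h
    exact hd (homogeneousComponent_eq_zero d g (by omega))
  set gd := homogeneousComponent d g with hgd
  have hgdh : gd.IsHomogeneous d := homogeneousComponent_isHomogeneous d g
  have h2 : ∀ σ, p σ * hat (s σ) (c σ).1 gd = C (e σ : L) * (hat (s σ) (c σ).1 q * gd) := by
    intro σ
    have h3 := he σ
    rw [← sum_homogeneousComponent g] at h3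
    simp only [map_sum, Finset.mul_sum] at h3
    have h4 := congrArg (homogeneousComponent (δ + d)) h3
    rw [homog_comp_sum _ _ (fun i => (hpδ σ).mul
      (hat_homog _ _ (homogeneousComponent_isHomogeneous i g))) d hdm,
      homog_comp_sum _ _ (fun i => ((hat_homog _ _ hqδ).mul
      (homogeneousComponent_isHomogeneous i g)).C_mul _) d hdm] at h4
    exact h4
  refine ⟨d, e, fun σ τ => ?_⟩
  have hinj : ∀ σ, Function.Injective (hat (s σ) (c σ).1) := fun σ => (hatE s σ (c σ)).injective
  have hne : ∀ σ {f : MvPolynomial ι L}, f ≠ 0 → hat (s σ) (c σ).1 f ≠ 0 := fun σ f hf =>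
    (map_ne_zero_iff _ (hinj σ)).2 hf
  have h5 : hat (s σ) (c σ).1 (p τ) * hat (s σ) (c σ).1 (hat (s τ) (c τ).1 gd) =
      C (s σ (e τ)) * (hat (s σ) (c σ).1 (hat (s τ) (c τ).1 q) * hat (s σ) (c σ).1 gd) := by
    rw [← map_mul, h2, map_mul, hat_C, map_mul]
  rw [hat_c_mul hmul σ τ hgdh, hat_c_mul hmul σ τ hqδ] at h5
  have h6 := hb σ τ
  have h7 := h2 (σ * τ)
  have h8 := h2 σ
  have hX : hat (s σ) (c σ).1 q * hat (s (σ * τ)) (c (σ * τ)).1 q * gd ≠ 0 :=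
    mul_ne_zero (mul_ne_zero (hne _ hq) (hne _ hq)) hd
  have h9 : (C ((b σ τ : L) * (a σ τ : L) ^ d * e (σ * τ)) : MvPolynomial ι L) *
      (hat (s σ) (c σ).1 q * hat (s (σ * τ)) (c (σ * τ)).1 q * gd) =
      C ((a σ τ : L) ^ δ * (e σ * s σ (e τ))) *
      (hat (s σ) (c σ).1 q * hat (s (σ * τ)) (c (σ * τ)).1 q * gd) := by
    simp only [C_mul]
    generalize hat (s σ) (c σ).1 q = Q1 at *
    generalize hat (s (σ * τ)) (c (σ * τ)).1 q = Q2 at *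
    generalize hat (s σ) (c σ).1 (p τ) = P1 at *
    generalize hat (s (σ * τ)) (c (σ * τ)).1 gd = G2 at *
    generalize hat (s σ) (c σ).1 gd = G1 at *
    generalize (C ((a σ τ : L) ^ d) : MvPolynomial ι L) = ad at *
    generalize (C ((a σ τ : L) ^ δ) : MvPolynomial ι L) = aδ at *
    generalize (C (b σ τ : L) : MvPolynomial ι L) = bb at *
    calc bb * ad * C (e (σ * τ) : L) * (Q1 * Q2 * gd)
        = bb * ad * Q1 * (C (e (σ * τ) : L) * (Q2 * gd)) := by ring
      _ = (bb * p (σ * τ) * Q1) * (ad * G2) := by rw [← h7]; ring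
      _ = p σ * (P1 * (ad * G2)) := by rw [h6]; ring
      _ = C (s σ (e τ)) * aδ * Q2 * (p σ * G1) := by rw [h5]; ring
      _ = _ := by rw [h8]; ring
  exact C_injective _ _ (mul_right_cancel₀ hX h9)

end hat
end Amitsur

set_option linter.unusedSectionVars false
set_option linter.unusedSimpArgs false

namespace Amitsur

section generic
open MvPolynomial
variable {L : Type u} [Field L] {ι : Type} [Fintype ι] [DecidableEq ι]
  {Q : Type u} [Field Q] {t : MvPolynomial ι L →+* Q}

theorem toQ_ne (ht : Function.Injective t) {p : MvPolynomial ι L} (hp : p ≠ 0) : t p ≠ 0 :=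
  (map_ne_zero_iff _ ht).2 hp

/-- homogeneous fractions of degree zero -/
def IsHF (t : MvPolynomial ι L →+* Q) (z : Q) : Prop :=
  ∃ (d : ℕ) (p q : MvPolynomial ι L), p.IsHomogeneous d ∧ q.IsHomogeneous d ∧ q ≠ 0 ∧
    z = t p / t q

theorem IsHF.of_div {d : ℕ} {p q : MvPolynomial ι L} (hp : p.IsHomogeneous d)
    (hq : q.IsHomogeneous d) (hq0 : q ≠ 0) : IsHF t (t p / t q) :=
  ⟨d, p, q, hp, hq, hq0, rfl⟩

/-- The field of homogeneous fractions of degree zero. -/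
noncomputable def KK (ht : Function.Injective t) : Subfield Q where
  carrier := {z | IsHF t z}
  zero_mem' := ⟨0, 0, 1, isHomogeneous_zero _ _ _, isHomogeneous_one _ _, one_ne_zero, by simp⟩
  one_mem' := ⟨0, 1, 1, isHomogeneous_one _ _, isHomogeneous_one _ _, one_ne_zero, by simp⟩
  add_mem' := by
    rintro _ _ ⟨d, p, q, hp, hq, h0, rfl⟩ ⟨d', p', q', hp', hq', h0', rfl⟩
    refine ⟨d + d', p * q' + q * p', q * q', (hp.mul hq').add (hq.mul hp'), hq.mul hq',
      mul_ne_zero h0 h0', ?_⟩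
    rw [div_add_div _ _ (toQ_ne ht h0) (toQ_ne ht h0')]
    simp
  mul_mem' := by
    rintro _ _ ⟨d, p, q, hp, hq, h0, rfl⟩ ⟨d', p', q', hp', hq', h0', rfl⟩
    refine ⟨d + d', p * p', q * q', hp.mul hp', hq.mul hq', mul_ne_zero h0 h0', ?_⟩
    rw [div_mul_div_comm]
    simp
  neg_mem' := by
    rintro _ ⟨d, p, q, hp, hq, h0, rfl⟩
    exact ⟨d, -p, q, hp.neg, hq, h0, by rw [map_neg, neg_div]⟩
  inv_mem' := by
    rintro _ ⟨d, p, q, hp, hq, h0, rfl⟩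
    by_cases hp0 : p = 0
    · exact ⟨d, p, q, hp, hq, h0, by simp [hp0]⟩
    · exact ⟨d, q, p, hq, hp, hp0, by rw [inv_div]⟩

/-- constants -/
noncomputable def toK (ht : Function.Injective t) : L →+* KK ht :=
  (t.comp C).codRestrict (KK ht) fun l =>
    ⟨0, C l, 1, isHomogeneous_C _ _, isHomogeneous_one _ _, one_ne_zero, by simp⟩

theorem toK_val (ht : Function.Injective t) (l : L) : ((toK ht l : KK ht) : Q) = t (C l) := rfl

variable {G : Type*} [Group G] {s : G →* (L →+* L)} {c : G → (Matrix ι ι L)ˣ} {a : G → G → Lˣ}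

theorem hat_injective (s : G →* (L →+* L)) (σ : G) (M : (Matrix ι ι L)ˣ) :
    Function.Injective (hat (s σ) M.1) := (hatE s σ M).injective

theorem Phi_mem {Φ : G → (Q →+* Q)} (hΦ : ∀ σ p, Φ σ (t p) = t (hat (s σ) (c σ).1 p))
    (σ : G) (z : Q) (hz : IsHF t z) :
    IsHF t (Φ σ z) := by
  obtain ⟨d, p, q, hp, hq, h0, rfl⟩ := hz
  rw [map_div₀, hΦ, hΦ]
  exact IsHF.of_div (hat_homog _ _ hp) (hat_homog _ _ hq)
    ((map_ne_zero_iff _ (hat_injective s σ (c σ))).2 h0)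

/-- action on `KK` -/
noncomputable def sK (ht : Function.Injective t) {Φ : G → (Q →+* Q)}
    (hΦ : ∀ σ p, Φ σ (t p) = t (hat (s σ) (c σ).1 p)) (hone : c 1 = 1)
    (hmul : ∀ σ τ, (c σ).1 * (s σ).mapMatrix (c τ).1 = (a σ τ : L) • (c (σ * τ)).1) :
    G →* (KK ht →+* KK ht) where
  toFun σ := ((Φ σ).comp (KK ht).subtype).codRestrict (KK ht) fun z =>
    Phi_mem hΦ σ _ z.2
  map_one' := by
    ext z
    change Φ 1 z.1 = z.1
    obtain ⟨z, d, p, q, hp, hq, h0, rfl⟩ := z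
    have : ∀ p : MvPolynomial ι L, hat (1 : L →+* L) 1 p = p := hat_one
    simp only [map_div₀, hΦ, hone, Units.val_one]
    rw [map_one s, this, this]
  map_mul' σ τ := by
    ext z
    change Φ (σ * τ) z.1 = Φ σ (Φ τ z.1)
    obtain ⟨z, d, p, q, hp, hq, h0, rfl⟩ := z
    simp only [map_div₀, hΦ]
    rw [hat_c_mul hmul _ _ hp, hat_c_mul hmul _ _ hq, map_mul t, map_mul t, mul_div_mul_left]
    apply toQ_ne ht
    rw [Ne, C_eq_zero]
    exact pow_ne_zero _ (Units.ne_zero _)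

section
variable (ht : Function.Injective t) {Φ : G → (Q →+* Q)}
    (hΦ : ∀ σ p, Φ σ (t p) = t (hat (s σ) (c σ).1 p)) (hone : c 1 = 1)
    (hmul : ∀ σ τ, (c σ).1 * (s σ).mapMatrix (c τ).1 = (a σ τ : L) • (c (σ * τ)).1)

theorem sK_val (σ : G) (z : KK ht) : ((sK ht hΦ hone hmul σ z : KK ht) : Q) = Φ σ z.1 := rfl

theorem sK_toK (σ : G) (l : L) : sK ht hΦ hone hmul σ (toK ht l) = toK ht (s σ l) := by
  apply Subtype.ext
  rw [sK_val, toK_val, hΦ, hat_C, toK_val]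

theorem trivial_a [Nonempty ι] :
    ∃ f : G → (KK ht)ˣ, ∀ σ τ,
      (toK ht (a σ τ : L)) * (f (σ * τ)).1 = (f σ).1 * sK ht hΦ hone hmul σ (f τ).1 := by
  let i : ι := Classical.arbitrary ι
  have hX : (X i : MvPolynomial ι L) ≠ 0 := X_ne_zero i
  have hh : ∀ σ, hat (s σ) (c σ).1 (X i) ≠ 0 := fun σ =>
    (map_ne_zero_iff _ (hat_injective s σ (c σ))).2 hX
  have hmem : ∀ σ, t (hat (s σ) (c σ).1 (X i)) / t (X i) ∈ KK ht := fun σ =>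
    IsHF.of_div (hat_homog _ _ (isHomogeneous_X _ i)) (isHomogeneous_X _ i) hX
  have hex : ∀ σ, ∃ f : (KK ht)ˣ, f.1.1 = t (hat (s σ) (c σ).1 (X i)) / t (X i) := fun σ =>
    ⟨Units.mk0 ⟨_, hmem σ⟩ fun h =>
      div_ne_zero (toQ_ne ht (hh σ)) (toQ_ne ht hX) (congrArg Subtype.val h), rfl⟩
  choose f hf using hex
  refine ⟨f, fun σ τ => ?_⟩
  apply Subtype.ext
  rw [Subfield.coe_mul, Subfield.coe_mul, sK_val, toK_val, hf, hf, hf]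
  rw [map_div₀, hΦ, hΦ, hat_c_mul hmul _ _ (isHomogeneous_X _ i), map_mul t, pow_one]
  have h1 := toQ_ne ht (hh σ)
  have h2 := toQ_ne ht hX
  field_simp

theorem power_of_trivial [Finite G] 
    (b : G → G → Lˣ) (f : G → (KK ht)ˣ) (hf : ∀ σ τ,
      (toK ht (b σ τ : L)) * (f (σ * τ)).1 = (f σ).1 * sK ht hΦ hone hmul σ (f τ).1) :
    ∃ (δ d : ℕ) (e : G → Lˣ), ∀ σ τ,
      (b σ τ : L) * (a σ τ : L) ^ d * e (σ * τ) = (a σ τ : L) ^ δ * (e σ * s σ (e τ)) := by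
  classical
  cases nonempty_fintype G
  have h1 : ∀ σ, IsHF t (f σ).1.1 := fun σ => (f σ).1.2
  choose d p q hp hq hq0 hfpq using h1
  have hp0 : ∀ σ, p σ ≠ 0 := by
    intro σ h
    have := hfpq σ
    rw [h, map_zero, zero_div] at this
    exact (f σ).ne_zero (Subtype.ext this)
  obtain ⟨Q', hQ'⟩ : ∃ Q' : MvPolynomial ι L, Q' = ∏ τ, q τ := ⟨_, rfl⟩
  obtain ⟨P, hP'⟩ : ∃ P : G → MvPolynomial ι L,
    ∀ σ, P σ = p σ * ∏ τ ∈ Finset.univ.erase σ, q τ := ⟨_, fun _ => rfl⟩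
  have hQ0 : Q' ≠ 0 := hQ' ▸ Finset.prod_ne_zero_iff.2 fun τ _ => hq0 τ
  have hE0 : ∀ σ, ∏ τ ∈ Finset.univ.erase σ, q τ ≠ 0 := fun σ =>
    Finset.prod_ne_zero_iff.2 fun τ _ => hq0 τ
  have hP0 : ∀ σ, P σ ≠ 0 := fun σ => hP' σ ▸ mul_ne_zero (hp0 σ) (hE0 σ)
  have hQ : Q'.IsHomogeneous (∑ τ, d τ) := hQ' ▸ IsHomogeneous.prod _ _ _ fun τ _ => hq τ
  have hP : ∀ σ, (P σ).IsHomogeneous (∑ τ, d τ) := by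
    intro σ
    rw [← Finset.add_sum_erase _ _ (Finset.mem_univ σ), hP']
    exact (hp σ).mul (IsHomogeneous.prod _ _ _ fun τ _ => hq τ)
  have hfPQ : ∀ σ, (f σ).1.1 = t (P σ) / t Q' := by
    intro σ
    rw [hfpq]
    have : Q' = q σ * ∏ τ ∈ Finset.univ.erase σ, q τ :=
      hQ'.trans (Finset.mul_prod_erase _ _ (Finset.mem_univ σ)).symm
    rw [this, hP', map_mul, map_mul, mul_div_mul_right _ _ (toQ_ne ht (hE0 σ))]
  obtain ⟨d', e, h⟩ := ufd_step hmul b P Q' hP0 hQ0 hP hQ (by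
    intro σ τ
    have h2 := congrArg Subtype.val (hf σ τ)
    rw [Subfield.coe_mul, Subfield.coe_mul, sK_val, toK_val] at h2
    rw [hfPQ, hfPQ, hfPQ, map_div₀, hΦ, hΦ] at h2
    have h3 : t (hat (s σ) (c σ).1 Q') ≠ 0 :=
      toQ_ne ht ((map_ne_zero_iff _ (hat_injective s σ (c σ))).2 hQ0)
    have h4 := toQ_ne ht hQ0
    apply ht
    rw [map_mul, map_mul, map_mul]
    field_simp at h2
    exact h2)
  exact ⟨_, d', e, h⟩

end

theorem exists_generic [Nonempty ι] [Finite G] (hs : Function.Injective s) (hone : c 1 = 1)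
    (hmul : ∀ σ τ, (c σ).1 * (s σ).mapMatrix (c τ).1 = (a σ τ : L) • (c (σ * τ)).1) :
    ∃ (K : Type u) (_ : Field K) (j : L →+* K) (S : G →* (K →+* K)),
      Function.Injective S ∧ (∀ σ l, S σ (j l) = j (s σ l)) ∧
      (∃ f : G → Kˣ, ∀ σ τ, j (a σ τ : L) * (f (σ * τ)).1 = (f σ).1 * S σ (f τ).1) ∧
      (∀ (b : G → G → Lˣ) (f : G → Kˣ),
        (∀ σ τ, j (b σ τ : L) * (f (σ * τ)).1 = (f σ).1 * S σ (f τ).1) →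
        ∃ (δ d : ℕ) (e : G → Lˣ), ∀ σ τ,
          (b σ τ : L) * (a σ τ : L) ^ d * e (σ * τ) = (a σ τ : L) ^ δ * (e σ * s σ (e τ))) := by
  have ht : Function.Injective (algebraMap (MvPolynomial ι L) (FractionRing (MvPolynomial ι L))) :=
    IsFractionRing.injective _ _
  have hΦ : ∀ σ, ∃ Φ : FractionRing (MvPolynomial ι L) →+* FractionRing (MvPolynomial ι L),
      ∀ p, Φ (algebraMap _ _ p) = algebraMap _ _ (hat (s σ) (c σ).1 p) := fun σ =>
    ⟨IsFractionRing.lift (g := (algebraMap _ _).comp (hat (s σ) (c σ).1))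
      (ht.comp (hat_injective s σ (c σ))), fun p => IsFractionRing.lift_algebraMap _ _⟩
  choose Φ hΦ using hΦ
  refine ⟨KK ht, inferInstance, toK ht, sK ht hΦ hone hmul, ?_, sK_toK ht hΦ hone hmul,
    trivial_a ht hΦ hone hmul, power_of_trivial ht hΦ hone hmul⟩
  intro σ τ h
  apply hs
  ext l
  apply (toK ht).injective
  rw [← sK_toK ht hΦ hone hmul, ← sK_toK ht hΦ hone hmul, h]

end generic
end Amitsur

set_option linter.unusedSectionVars false
set_option linter.unusedSimpArgs false

namespace Amitsur

section trivialize
variable {K L N : Type*} [Field K] [Field L] [Field N] {G : Type*} [Group G]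
  {ι : Type*} [Fintype ι] [DecidableEq ι]
variable {F A : Type*} [Field F] [Ring A] [Algebra F A]
  [Algebra F K] [Algebra F L] [Algebra F N] [Algebra N K] [IsScalarTower F N K]

theorem Coc.map {s : G →* (L →+* L)} {ρ : A →ₐ[F] Matrix ι ι L} {c : G → (Matrix ι ι L)ˣ}
    {a : G → G → Lˣ} (h : Coc s ρ c a) (j : L →ₐ[F] K) {S : G →* (K →+* K)}
    (hS : ∀ σ l, S σ (j l) = j (s σ l)) :
    Coc S (j.mapMatrix.comp ρ) (fun σ => Units.map ((j.mapMatrix : Matrix ι ι L →ₐ[F] Matrix ι ι K) :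
        Matrix ι ι L →* Matrix ι ι K) (c σ))
      (fun σ τ => Units.map (j : L →* K) (a σ τ)) := by
  have hM : ∀ σ (X : Matrix ι ι L), (S σ).mapMatrix (j.mapMatrix X) =
      j.mapMatrix ((s σ).mapMatrix X) := by
    intro σ X
    ext i k
    exact hS σ _
  refine ⟨?_, ?_, ?_⟩
  · simp [h.one]
  · intro σ τ
    change j.mapMatrix (c σ).1 * (S σ).mapMatrix (j.mapMatrix (c τ).1) =
      j (a σ τ : L) • j.mapMatrix (c (σ * τ)).1
    rw [hM, ← map_mul, h.mul]
    ext i k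
    simp
  · intro σ x
    change j.mapMatrix (c σ).1 * (S σ).mapMatrix (j.mapMatrix (ρ x)) =
      j.mapMatrix (ρ x) * j.mapMatrix (c σ).1
    rw [hM, ← map_mul, h.comm, map_mul]

theorem map_smul_matrix (f : K →+* K) (x : K) (X : Matrix ι ι K) :
    f.mapMatrix (x • X) = f x • f.mapMatrix X := by
  ext i k
  simp

theorem trivialize [Nonempty ι] [FiniteDimensional F A] {s : G →* (K →+* K)}
    {ρ : A →ₐ[F] Matrix ι ι K}
    {c : G → (Matrix ι ι K)ˣ} {b : G → G → Kˣ} (h : Coc s ρ c b) (hρ : Full ρ)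
    {θ : A →ₐ[F] Matrix ι ι K} (hθ : Full θ) (hfix : ∀ σ x, (s σ).mapMatrix (θ x) = θ x) :
    ∃ f : G → Kˣ, ∀ σ τ, (b σ τ : K) * (f (σ * τ)).1 = (f σ).1 * s σ (f τ).1 := by
  obtain ⟨P, hP⟩ := skolem_noether hρ hθ
  have key : ∀ σ, ∃ f : Kˣ, P.1 * (c σ).1 = (f : K) • (s σ).mapMatrix P.1 := by
    intro σ
    have h1 : (s σ).mapMatrix P.1 * (s σ).mapMatrix P⁻¹.1 = 1 := by
      rw [← map_mul, P.mul_inv, map_one]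
    have h2 : (s σ).mapMatrix P⁻¹.1 * (s σ).mapMatrix P.1 = 1 := by
      rw [← map_mul, P.inv_mul, map_one]
    have h3 : ∀ x, (s σ).mapMatrix (ρ x) * (s σ).mapMatrix P⁻¹.1 =
        (s σ).mapMatrix P⁻¹.1 * θ x := by
      intro x
      have := congrArg (s σ).mapMatrix (hP x)
      rw [map_mul, map_mul, hfix] at this
      calc _ = (s σ).mapMatrix P⁻¹.1 * ((s σ).mapMatrix P.1 * (s σ).mapMatrix (ρ x)) *
            (s σ).mapMatrix P⁻¹.1 := by rw [← mul_assoc, h2, one_mul]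
        _ = (s σ).mapMatrix P⁻¹.1 * θ x * ((s σ).mapMatrix P.1 * (s σ).mapMatrix P⁻¹.1) := by
            rw [← this]; simp only [mul_assoc]
        _ = _ := by rw [h1, mul_one]
    obtain ⟨f, hf⟩ := hθ.commutant (M := P.1 * (c σ).1 * (s σ).mapMatrix P⁻¹.1) (by
      intro x
      calc P.1 * (c σ).1 * (s σ).mapMatrix P⁻¹.1 * θ x
          = P.1 * ((c σ).1 * (s σ).mapMatrix (ρ x)) * (s σ).mapMatrix P⁻¹.1 := by
            simp only [mul_assoc, h3]
        _ = (P.1 * ρ x) * (c σ).1 * (s σ).mapMatrix P⁻¹.1 := by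
            rw [h.comm]; simp only [mul_assoc]
        _ = _ := by rw [← hP]; simp only [mul_assoc])
    have h4 : P.1 * (c σ).1 = f • (s σ).mapMatrix P.1 := by
      calc P.1 * (c σ).1 = P.1 * (c σ).1 * (s σ).mapMatrix P⁻¹.1 * (s σ).mapMatrix P.1 := by
            rw [mul_assoc _ _ ((s σ).mapMatrix P.1), h2, mul_one]
        _ = _ := by rw [hf, smul_mul_assoc, one_mul]
    have hf0 : f ≠ 0 := by
      rintro rfl
      rw [zero_smul] at h4
      exact (P * c σ).ne_zero h4
    exact ⟨Units.mk0 f hf0, h4⟩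
  choose f hf using key
  refine ⟨f, fun σ τ => ?_⟩
  have h5 : ((b σ τ : K) * (f (σ * τ)).1) • (s (σ * τ)).mapMatrix P.1 =
      ((f σ).1 * s σ (f τ).1) • (s (σ * τ)).mapMatrix P.1 := by
    calc _ = (b σ τ : K) • (P.1 * (c (σ * τ)).1) := by rw [hf, smul_smul]
      _ = P.1 * (c σ).1 * (s σ).mapMatrix (c τ).1 := by
          rw [mul_assoc, h.mul, mul_smul_comm]
      _ = (f σ).1 • (s σ).mapMatrix (P.1 * (c τ).1) := by
          rw [hf, map_mul, smul_mul_assoc]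
      _ = _ := by
          rw [hf, map_smul_matrix, smul_smul, map_mul]; rfl
  have h6 : (s (σ * τ)).mapMatrix P.1 ≠ 0 := by
    have := (Units.map (((s (σ * τ)).mapMatrix : Matrix ι ι K →+* Matrix ι ι K) :
      Matrix ι ι K →* Matrix ι ι K) P).ne_zero
    exact this
  exact smul_left_injective K h6 h5

theorem split_fixed [Nonempty ι] [Finite G] {s : G →* (K →+* K)} (hs : Function.Injective s)
    (hN : ∀ z : K, (∀ σ, s σ z = z) → ∃ y, algebraMap N K y = z)
    {ρ : A →ₐ[F] Matrix ι ι K}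
    {c : G → (Matrix ι ι K)ˣ} {a : G → G → Kˣ} (h : Coc s ρ c a)
    (f : G → Kˣ) (hf : ∀ σ τ, (a σ τ : K) * (f (σ * τ)).1 = (f σ).1 * s σ (f τ).1) :
    Nonempty (A →ₐ[F] Matrix ι ι N) := by
  have h1 : f 1 = 1 := by
    have := hf 1 1
    rw [h.a_one, map_one s, mul_one, Units.val_one, one_mul] at this
    have h2 : (f 1).1 * 1 = (f 1).1 * (f 1).1 := by rw [mul_one]; exact this
    exact (Units.ext (mul_left_cancel₀ (f 1).ne_zero h2)).symm
  have h2 : Coc s ρ (fun σ => (f σ)⁻¹ • c σ) 1 := by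
    refine h.smul (fun σ => (f σ)⁻¹) (by simp [h1]) (fun σ τ => ?_)
    have h3 := hf σ τ
    have h4 : s σ (f τ).1 ≠ 0 := (map_ne_zero _).2 (f τ).ne_zero
    simp only [Pi.one_apply, Units.val_one, one_mul, Units.val_inv_eq_inv_val, map_inv₀]
    field_simp
    rw [← h3]
    ring
  obtain ⟨ρ', -⟩ := h2.descend (N := N) hs hN
  exact ⟨ρ'⟩

theorem Coc.cocycle [Nonempty ι] {s : G →* (K →+* K)} {ρ : A →ₐ[F] Matrix ι ι K}
    {c : G → (Matrix ι ι K)ˣ} {a : G → G → Kˣ} (h : Coc s ρ c a) (σ τ υ : G) :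
    (a σ τ : K) * a (σ * τ) υ = s σ (a τ υ) * a σ (τ * υ) := by
  have h5 : ((a σ τ : K) * a (σ * τ) υ) • (c (σ * τ * υ)).1 =
      (s σ (a τ υ) * a σ (τ * υ)) • (c (σ * τ * υ)).1 := by
    calc _ = (a σ τ : K) • ((c (σ * τ)).1 * (s (σ * τ)).mapMatrix (c υ).1) := by
          rw [h.mul, smul_smul]
      _ = (c σ).1 * ((s σ).mapMatrix (c τ).1 * (s (σ * τ)).mapMatrix (c υ).1) := by
          rw [← smul_mul_assoc, ← h.mul, mul_assoc]
      _ = (c σ).1 * (s σ).mapMatrix ((c τ).1 * (s τ).mapMatrix (c υ).1) := by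
          rw [map_mul s, map_mul (s σ).mapMatrix]; rfl
      _ = _ := by rw [h.mul, map_smul_matrix, mul_smul_comm, h.mul, smul_smul, mul_assoc σ]
  exact smul_left_injective K (c _).ne_zero h5

theorem fix_sign [Finite G] {s : G →* (K →+* K)} {a b : G → G → Kˣ}
    (ha : ∀ σ τ υ, (a σ τ : K) * a (σ * τ) υ = s σ (a τ υ) * a σ (τ * υ))
    (δ d : ℕ) (e : G → Kˣ) (h : ∀ σ τ,
      (b σ τ : K) * (a σ τ : K) ^ d * e (σ * τ) = (a σ τ : K) ^ δ * (e σ * s σ (e τ))) :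
    ∃ (k : ℕ) (e' : G → Kˣ), ∀ σ τ,
      (b σ τ : K) * e' (σ * τ) = (a σ τ ^ k : Kˣ) * (e' σ * s σ (e' τ)) := by
  classical
  cases nonempty_fintype G
  obtain ⟨m, hm⟩ : ∃ m, Fintype.card G = m + 1 :=
    ⟨Fintype.card G - 1, (Nat.succ_pred_eq_of_pos Fintype.card_pos).symm⟩
  let E : G → Kˣ := fun σ => ∏ υ, a σ υ
  have hE : ∀ σ τ, (a σ τ : K) ^ (m + 1) * E (σ * τ) = s σ (E τ) * E σ := by
    intro σ τ
    have := Finset.prod_congr (rfl : (Finset.univ : Finset G) = Finset.univ)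
      fun υ _ => ha σ τ υ
    rw [Finset.prod_mul_distrib, Finset.prod_mul_distrib, Finset.prod_const, Finset.card_univ,
      hm, Fintype.prod_equiv (Equiv.mulLeft τ) (fun υ => (a σ (τ * υ) : K))
        (fun υ => (a σ υ : K)) (fun _ => rfl)] at this
    simpa [E, Units.coe_prod, map_prod] using this
  refine ⟨δ + d * m, fun σ => e σ * (E σ ^ d)⁻¹, fun σ τ => ?_⟩
  have h1 := h σ τ
  have h2 := congrArg (· ^ d) (hE σ τ)
  have h4 : s σ (E τ).1 ≠ 0 := (map_ne_zero _).2 (E τ).ne_zero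
  simp only [Units.val_mul, Units.val_pow_eq_pow_val, Units.val_inv_eq_inv_val, map_mul,
    map_inv₀, map_pow] at h1 h2 ⊢
  field_simp
  have h3 : (a σ τ : K) ^ d ≠ 0 := pow_ne_zero _ (Units.ne_zero _)
  apply mul_left_cancel₀ h3
  rw [mul_pow, mul_pow, ← pow_mul] at h2
  calc _ = ((b σ τ : K) * (a σ τ : K) ^ d * e (σ * τ)) * (s σ (E τ) ^ d * E σ ^ d) := by ring
    _ = _ := by rw [h1, ← h2]; ring

end trivialize
end Amitsur

set_option linter.unusedSectionVars false
set_option linter.unusedSimpArgs false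

namespace Amitsur

section place
variable {F A E N : Type u} [Field F] [Ring A] [Algebra F A] [Field E] [Algebra F E]
  [Field N] [Algebra F N]

theorem free_lattice (V : ValuationSubring E) {n : ℕ} (Λ : Submodule V (Fin n → E))
    (hfg : Λ.FG) : Module.Free V Λ := by
  have : Module.Finite V Λ := Module.Finite.iff_fg.2 hfg
  have h1 : Module.Flat V Λ := by
    rw [Module.Flat.flat_iff_torsion_eq_bot_of_isBezout]
    rw [eq_bot_iff]
    rintro ⟨x, hx⟩ hx'
    rw [Submodule.mem_torsion_iff] at hx'
    obtain ⟨r, hr⟩ := hx'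
    have h2 : (r : V) • x = 0 := congrArg Subtype.val hr
    have h3 : ((r : V) : E) ≠ 0 := by
      simp
    have h4 : ((r : V) : E) • x = 0 := h2
    have h5 := (smul_eq_zero.1 h4).resolve_left h3
    simp [h5]
  exact Module.free_of_flat_of_isLocalRing

theorem place_spl [Algebra.IsCentral F A] [IsSimpleRing A] [FiniteDimensional F A]
    (P : FPlace F E N) (h : Spl F A E) : Spl F A N := by
  obtain ⟨n, hn, ⟨ρ⟩⟩ := h
  have hpos : 0 < Module.finrank F A := Module.finrank_pos
  have hn0 : 0 < n := by
    rcases Nat.eq_zero_or_pos n with h | h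
    · subst h; simp at hn; omega
    · exact h
  have hfull : Full ρ := full_of_csa ρ (by simpa using hn)
  let V := P.V
  let b := Module.finBasis F A
  let v : Fin n → E := Pi.single ⟨0, hn0⟩ 1
  let Λ : Submodule V (Fin n → E) := Submodule.span V (Set.range fun t => (ρ (b t)).mulVec v)
  have hfg : Λ.FG := Submodule.fg_span (Set.finite_range _)
  have : Module.Free V Λ := free_lattice V Λ hfg
  have : Module.Finite V Λ := Module.Finite.iff_fg.2 hfg
  let ι : F → V := fun r => ⟨algebraMap F E r, (P.compat r).1⟩
  have hι : ∀ r, P.f (ι r) = algebraMap F N r := fun r => (P.compat r).2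
  have hmem : ∀ x, (ρ x).mulVec v ∈ Λ := by
    intro x
    rw [← b.sum_repr x, map_sum, Matrix.sum_mulVec]
    refine Submodule.sum_mem _ fun i _ => ?_
    rw [map_smul]
    have : ((b.repr x i) • ρ (b i)).mulVec v = (ι (b.repr x i)) • (ρ (b i)).mulVec v := by
      rw [Matrix.smul_mulVec]
      ext k
      simp only [Pi.smul_apply, Algebra.smul_def]
      rfl
    rw [this]
    exact Submodule.smul_mem _ _ (Submodule.subset_span ⟨i, rfl⟩)
  have hstab : ∀ x, ∀ w ∈ Λ, (ρ x).mulVec w ∈ Λ := by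
    intro x w hw
    induction hw using Submodule.span_induction with
    | mem w hw =>
      obtain ⟨t, rfl⟩ := hw
      rw [Matrix.mulVec_mulVec, ← map_mul]
      exact hmem _
    | zero => rw [Matrix.mulVec_zero]; exact Λ.zero_mem
    | add w w' _ _ h h' => rw [Matrix.mulVec_add]; exact Λ.add_mem h h'
    | smul r w _ h => rw [Matrix.mulVec_smul]; exact Λ.smul_mem _ h
  let g : A →+* Module.End V Λ :=
    { toFun := fun x =>
        { toFun := fun w => ⟨(ρ x).mulVec w.1, hstab x w.1 w.2⟩
          map_add' := fun w w' => Subtype.ext (Matrix.mulVec_add (ρ x) w.1 w'.1)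
          map_smul' := fun r w => Subtype.ext (Matrix.mulVec_smul (ρ x) r w.1) }
      map_one' := by
        ext1 w
        apply Subtype.ext
        change (ρ 1).mulVec w.1 = w.1
        rw [map_one, Matrix.one_mulVec]
      map_mul' := by
        intro x y
        ext1 w
        apply Subtype.ext
        change (ρ (x * y)).mulVec w.1 = (ρ x).mulVec ((ρ y).mulVec w.1)
        rw [map_mul, Matrix.mulVec_mulVec]
      map_zero' := by
        ext1 w
        apply Subtype.ext
        change (ρ 0).mulVec w.1 = 0
        rw [map_zero, Matrix.zero_mulVec]
      map_add' := by
        intro x y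
        ext1 w
        apply Subtype.ext
        change (ρ (x + y)).mulVec w.1 = (ρ x).mulVec w.1 + (ρ y).mulVec w.1
        rw [map_add, Matrix.add_mulVec] }
  have hg : ∀ r : F, g (algebraMap F A r) = algebraMap V _ (ι r) := by
    intro r
    ext1 w
    apply Subtype.ext
    change (ρ (algebraMap F A r)).mulVec w.1 = ι r • w.1
    rw [AlgHom.commutes]
    ext k
    rw [Matrix.algebraMap_eq_diagonal, Matrix.mulVec_diagonal]
    rfl
  let β := Module.finBasis V Λ
  have hspan : Submodule.span E (Set.range fun i => (β i : Fin n → E)) = ⊤ := by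
    rw [eq_top_iff]
    have h1 : ∀ w ∈ Λ, w ∈ Submodule.span E (Set.range fun i => (β i : Fin n → E)) := by
      intro w hw
      have h2 := congrArg Subtype.val (β.sum_repr ⟨w, hw⟩)
      have h3 : ∑ i, (((β.repr ⟨w, hw⟩ i : V) : E)) • (β i : Fin n → E) = w := by
        refine Eq.trans ?_ h2
        simp only [Submodule.coe_sum]
        rfl
      rw [← h3]
      exact Submodule.sum_mem _ fun i _ => Submodule.smul_mem _ _ (Submodule.subset_span ⟨i, rfl⟩)
    have h4 : ∀ X : Matrix (Fin n) (Fin n) E,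
        X.mulVec v ∈ Submodule.span E (Set.range fun i => (β i : Fin n → E)) := by
      intro X
      have : X ∈ Submodule.span E (Set.range ρ) := hfull.1 ▸ trivial
      induction this using Submodule.span_induction with
      | mem w hw =>
        obtain ⟨t, rfl⟩ := hw
        exact h1 _ (hmem _)
      | zero => rw [Matrix.zero_mulVec]; exact Submodule.zero_mem _
      | add w w' _ _ h h' => rw [Matrix.add_mulVec]; exact Submodule.add_mem _ h h'
      | smul r w _ h => rw [Matrix.smul_mulVec]; exact Submodule.smul_mem _ _ h
    intro w _
    have h5 := h4 (Matrix.of fun i _ => w i)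
    have h6 : (Matrix.of fun i (_ : Fin n) => w i).mulVec v = w := by
      ext i
      simp [v, Matrix.mulVec_single]
    rwa [h6] at h5
  have hli : LinearIndependent E (fun i => (β i : Fin n → E)) := by
    rw [← LinearIndependent.iff_fractionRing V E]
    exact β.linearIndependent.map' Λ.subtype (Submodule.ker_subtype _)
  have hcard : Module.finrank V Λ = n := by
    have := Module.finrank_eq_card_basis (Module.Basis.mk hli hspan.ge)
    simpa using this.symm
  refine ⟨Module.finrank V Λ, by rw [hcard, hn], ⟨?_⟩⟩
  let m : A →+* Matrix (Fin (Module.finrank V Λ)) (Fin (Module.finrank V Λ)) N :=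
    (P.f.mapMatrix).comp (((LinearMap.toMatrixAlgEquiv β : _ →+* _)).comp g)
  exact
    { m with
      commutes' := by
        intro r
        change P.f.mapMatrix (LinearMap.toMatrixAlgEquiv β (g (algebraMap F A r))) = _
        rw [hg, AlgEquiv.commutes, Matrix.algebraMap_eq_diagonal, Matrix.algebraMap_eq_diagonal]
        ext i j
        by_cases hij : i = j
        · subst hij
          simp only [RingHom.mapMatrix_apply, Matrix.map_apply, Matrix.diagonal_apply_eq]
          exact hι r
        · simp [Matrix.diagonal_apply_ne _ hij] }

end place
end Amitsur

set_option linter.unusedSectionVars false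
set_option linter.unusedSimpArgs false

namespace Amitsur

section morita
variable {F B E : Type*} [Field F] [Ring B] [Algebra F B] [Field E] [Algebra F E]
  {κ : Type*} [Fintype κ] [DecidableEq κ]

theorem morita_spl {p : ℕ} (hp : 0 < p)
    (ρ : Matrix (Fin p) (Fin p) B →ₐ[F] Matrix κ κ E)
    (h : Fintype.card κ ^ 2 = p ^ 2 * Module.finrank F B) : Spl F B E := by
  let o : Fin p := ⟨0, hp⟩
  let e : Fin p → Fin p → B → Matrix (Fin p) (Fin p) B := fun i j b => Matrix.single i j b
  let r : Matrix (Fin p) (Fin p) B → Module.End E (κ → E) := fun x => Matrix.toLinAlgEquiv' (ρ x)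
  have r_mul : ∀ x y w, r (x * y) w = r x (r y w) := by
    intro x y w
    simp only [r, map_mul]
    rfl
  have r_add : ∀ x y w, r (x + y) w = r x w + r y w := by
    intro x y w
    simp only [r, map_add]
    rfl
  have r_one : ∀ w, r 1 w = w := by
    intro w
    simp only [r, map_one]
    rfl
  have r_zero : ∀ w, r 0 w = 0 := by
    intro w
    simp only [r, map_zero]
    rfl
  have r_sum : ∀ (f : Fin p → Matrix (Fin p) (Fin p) B) w, r (∑ i, f i) w = ∑ i, r (f i) w := by
    intro f w
    simp only [r, map_sum, LinearMap.sum_apply]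
  have r_smul : ∀ (c : F) x w, r (c • x) w = algebraMap F E c • r x w := by
    intro c x w
    have : ρ (c • x) = algebraMap F E c • ρ x := by rw [map_smul, algebraMap_smul]
    simp only [r, this, map_smul]
    rfl
  have e_mul : ∀ i j k b b', e i j b * e j k b' = e i k (b * b') := fun i j k b b' => by
    simp [e]
  have e_mul' : ∀ i j j' k b b', j ≠ j' → e i j b * e j' k b' = 0 := fun i j j' k b b' hj => by
    simp [e, hj]
  let V : Submodule E (κ → E) := LinearMap.range (r (e o o 1))
  have hV : ∀ i b w, r (e o i b) w ∈ V := fun i b w =>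
    ⟨r (e o i b) w, by rw [← r_mul, e_mul, one_mul]⟩
  have hV1 : ∀ w ∈ V, r (e o o 1) w = w := by
    rintro _ ⟨w, rfl⟩
    rw [← r_mul, e_mul, one_mul]
  let Θ : (κ → E) ≃ₗ[E] (Fin p → V) :=
    { toFun := fun w i => ⟨r (e o i 1) w, hV _ _ _⟩
      map_add' := fun w w' => by
        ext1 i
        exact Subtype.ext (map_add (r (e o i 1)) w w')
      map_smul' := fun c w => by
        ext1 i
        exact Subtype.ext (map_smul (r (e o i 1)) c w)
      invFun := fun u => ∑ i, r (e i o 1) (u i).1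
      left_inv := by
        intro w
        change ∑ i, r (e i o 1) (r (e o i 1) w) = w
        have : ∀ i, r (e i o 1) (r (e o i 1) w) = r (e i i 1) w := fun i => by
          rw [← r_mul, e_mul, one_mul]
        rw [Finset.sum_congr rfl fun i _ => this i, ← r_sum]
        have h1 : ∑ i, e i i (1 : B) = 1 := by
          ext a b
          simp only [e, Matrix.sum_apply, Matrix.single_apply, Matrix.one_apply]
          by_cases hab : a = b
          · subst hab; simp
          · rw [if_neg hab]
            refine Finset.sum_eq_zero fun i _ => ?_
            rw [if_neg]
            rintro ⟨rfl, rfl⟩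
            exact hab rfl
        rw [h1, r_one]
      right_inv := by
        intro u
        ext1 i
        apply Subtype.ext
        change r (e o i 1) (∑ j, r (e j o 1) (u j).1) = (u i).1
        rw [map_sum, Finset.sum_eq_single i]
        · rw [← r_mul, e_mul, one_mul, hV1 _ (u i).2]
        · intro j _ hj
          rw [← r_mul, e_mul' _ _ _ _ _ _ hj.symm, r_zero]
        · intro hi
          exact absurd (Finset.mem_univ i) hi }
  have hdim : Fintype.card κ = p * Module.finrank E V := by
    have := Θ.finrank_eq
    simpa [Module.finrank_pi_fintype] using this
  have hd : Module.finrank E V ^ 2 = Module.finrank F B := by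
    rw [hdim, mul_pow] at h
    exact Nat.eq_of_mul_eq_mul_left (pow_pos hp 2) h
  refine ⟨_, hd, ⟨?_⟩⟩
  let β := Module.finBasis E V
  let g : B →+* Module.End E V :=
    { toFun := fun b =>
        { toFun := fun w => ⟨r (e o o b) w.1, hV _ _ _⟩
          map_add' := fun w w' => Subtype.ext (map_add (r (e o o b)) w.1 w'.1)
          map_smul' := fun c w => Subtype.ext (map_smul (r (e o o b)) c w.1) }
      map_one' := by
        ext1 w
        exact Subtype.ext (hV1 _ w.2)
      map_mul' := by
        intro x y
        ext1 w
        apply Subtype.ext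
        change r (e o o (x * y)) w.1 = r (e o o x) (r (e o o y) w.1)
        rw [← r_mul, e_mul]
      map_zero' := by
        ext1 w
        apply Subtype.ext
        change r (e o o 0) w.1 = 0
        have : e o o (0 : B) = 0 := Matrix.single_zero _ _
        rw [this, r_zero]
      map_add' := by
        intro x y
        ext1 w
        apply Subtype.ext
        change r (e o o (x + y)) w.1 = r (e o o x) w.1 + r (e o o y) w.1
        have : e o o (x + y) = e o o x + e o o y := Matrix.single_add _ _ _ _
        rw [this, r_add] }
  have hg : ∀ c : F, g (algebraMap F B c) = algebraMap E _ (algebraMap F E c) := by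
    intro c
    ext1 w
    apply Subtype.ext
    change r (e o o (algebraMap F B c)) w.1 = algebraMap F E c • w.1
    have : e o o (algebraMap F B c) = c • e o o 1 := by
      rw [Algebra.algebraMap_eq_smul_one]
      exact (Matrix.smul_single _ _ _ _).symm
    rw [this, r_smul, hV1 _ w.2]
  let m : B →+* Matrix (Fin (Module.finrank E V)) (Fin (Module.finrank E V)) E :=
    ((LinearMap.toMatrixAlgEquiv β : _ →+* _)).comp g
  exact
    { m with
      commutes' := by
        intro c
        change LinearMap.toMatrixAlgEquiv β (g (algebraMap F B c)) = _
        rw [hg, AlgEquiv.commutes]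
        rfl }

end morita

theorem spl_of_brauerEquiv {F B T E : Type u} [Field F] [Ring B] [Algebra F B] [Ring T]
    [Algebra F T] [Field E] [Algebra F E] {κ : Type*} [Fintype κ] [DecidableEq κ]
    (θ : T →ₐ[F] Matrix κ κ E)
    (h : Fintype.card κ ^ 2 = Module.finrank F T) (hB : BrauerEquiv F B T) : Spl F B E := by
  obtain ⟨p, q, hp, hq, ⟨φ⟩⟩ := hB
  refine morita_spl hp (((Matrix.compAlgEquiv (Fin q) κ E F).toAlgHom.comp θ.mapMatrix).comp
    φ.toAlgHom) ?_
  have h1 := φ.toLinearEquiv.finrank_eq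
  rw [Module.finrank_matrix, Module.finrank_matrix] at h1
  simp only [Fintype.card_fin, Fintype.card_prod] at h1 ⊢
  rw [mul_pow, h]
  nlinarith

end Amitsur

set_option linter.unusedSectionVars false
set_option linter.unusedSimpArgs false

namespace Amitsur

theorem pos_of_sq {F A : Type*} [Field F] [Ring A] [Nontrivial A] [Algebra F A]
    [FiniteDimensional F A] {n : ℕ} (h : n ^ 2 = Module.finrank F A) : 0 < n := by
  have hpos : 0 < Module.finrank F A := Module.finrank_pos
  rcases Nat.eq_zero_or_pos n with h0 | h0
  · subst h0; simp at h; omega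
  · exact h0

theorem forward {F B C : Type u} [Field F] [Ring B] [Algebra F B] [Ring C] [Algebra F C]
    [Algebra.IsCentral F B] [IsSimpleRing B] [FiniteDimensional F B]
    [Algebra.IsCentral F C] [IsSimpleRing C] [FiniteDimensional F C]
    (H : ∀ (N : Type u) [Field N] [Algebra F N], Spl F C N → Spl F B N) :
    ∃ i : ℕ, BrauerEquiv F B (tpow F C i) := by
  obtain ⟨L, _, _, _, _, ⟨n, hn, ⟨ρ⟩⟩, ⟨m, hm, ⟨θ⟩⟩⟩ :=
    exists_galois_splitting (F := F) (A := C) (B := B)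
  have hn0 : 0 < n := pos_of_sq hn
  have hm0 : 0 < m := pos_of_sq hm
  have : Nonempty (Fin n) := ⟨⟨0, hn0⟩⟩
  have : Nonempty (Fin m) := ⟨⟨0, hm0⟩⟩
  obtain ⟨c, a, hc⟩ := exists_coc ρ (by simpa using hn)
  obtain ⟨c', b, hc'⟩ := exists_coc θ (by simpa using hm)
  obtain ⟨K, _, j, S, hSinj, hSj, ⟨f, hf⟩, hpow⟩ :=
    exists_generic (gal_injective (F := F) (L := L)) hc.one hc.mul
  letI : Algebra F K := (j.comp (algebraMap F L)).toAlgebra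
  let j' : L →ₐ[F] K := { j with commutes' := fun _ => rfl }
  let Nf : Subfield K :=
    { carrier := {z | ∀ σ, S σ z = z}
      mul_mem' := fun {x y} hx hy σ => by rw [map_mul, hx, hy]
      one_mem' := fun σ => map_one _
      add_mem' := fun {x y} hx hy σ => by rw [map_add, hx, hy]
      zero_mem' := fun σ => map_zero _
      neg_mem' := fun {x} hx σ => by rw [map_neg, hx]
      inv_mem' := fun x hx σ => by rw [map_inv₀, hx] }
  have hF : ∀ r : F, algebraMap F K r ∈ Nf := by
    intro r σ
    change S σ (j (algebraMap F L r)) = j (algebraMap F L r)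
    rw [hSj, gal_apply, AlgEquiv.commutes]
  letI : Algebra F Nf := ((algebraMap F K).codRestrict Nf hF).toAlgebra
  haveI : IsScalarTower F Nf K := IsScalarTower.of_algebraMap_eq fun r => rfl
  have hN : ∀ z : K, (∀ σ, S σ z = z) → ∃ y, algebraMap Nf K y = z := fun z hz =>
    ⟨⟨z, hz⟩, rfl⟩
  have hcK := hc.map j' hSj
  have hcK' := hc'.map j' hSj
  have hCN : Spl F C Nf := ⟨n, hn, split_fixed hSinj hN hcK f hf⟩
  obtain ⟨m', hm', ⟨ψ⟩⟩ := H Nf hCN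
  obtain rfl : m' = m := Nat.pow_left_injective (n := 2) (by norm_num) (hm'.trans hm.symm)
  let ψK : B →ₐ[F] Matrix (Fin m') (Fin m') K :=
    (IsScalarTower.toAlgHom F Nf K).mapMatrix.comp ψ
  have hfix : ∀ σ x, (S σ).mapMatrix (ψK x) = ψK x := by
    intro σ x
    ext i k
    exact (ψ x i k).2 σ
  obtain ⟨f', hf'⟩ := trivialize hcK' (full_of_csa _ (by simpa using hm))
    (full_of_csa ψK (by simpa using hm)) hfix
  obtain ⟨δ, d, e, he⟩ := hpow b f' hf'
  obtain ⟨k, e', he'⟩ := fix_sign hc.cocycle δ d e he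
  refine ⟨k, ?_⟩
  exact brauerEquiv_of_coc gal_injective gal_fixed (full_of_csa θ (by simpa using hm))
    ((full_of_csa ρ (by simpa using hn)).pow k) hc'
    (hc.pow (fun σ r => σ.commutes r) k) e' he'

theorem backward {F B C E : Type u} [Field F] [Ring B] [Algebra F B] [Ring C] [Algebra F C]
    [Field E] [Algebra F E]
    [Algebra.IsCentral F B] [IsSimpleRing B] [FiniteDimensional F B]
    [Algebra.IsCentral F C] [IsSimpleRing C] [FiniteDimensional F C]
    (hC : Spl F C E) {i : ℕ} (h : BrauerEquiv F B (tpow F C i)) : Spl F B E := by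
  obtain ⟨n, hn, ⟨ρ⟩⟩ := hC
  have hρ : Full ρ := full_of_csa ρ (by simpa using hn)
  exact spl_of_brauerEquiv (powHom ρ i) (hρ.pow i).2 h

end Amitsur

/-- Amitsur: the kernel of `Br(F) → Br(F(SB(C)))` — here `F(SB(C))` is
formalized as a generic splitting field `E` of `C`, which the function field of the
Severi–Brauer variety of `C` is — consists exactly of the classes of the tensor powers
of `C`, i.e. of the cyclic subgroup generated by `[C]`. -/
theorem kernel_genericSplittingField (F C : Type u) [Field F] [Ring C] [Algebra F C]
    (hC : IsCSA F C) (E : Type u) [Field E] [Algebra F E]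
    (hE : IsGenericSplittingField F C E) :
    ∀ (B : Type u) [Ring B] [Algebra F B], IsCSA F B →
      (IsSplit E (E ⊗[F] B) ↔ ∃ i : ℕ, BrauerEquiv F B (tpow F C i)) := by
  intro B _ _ hB
  obtain ⟨_, _, _⟩ := hC
  obtain ⟨_, _, _⟩ := hB
  constructor
  · intro h
    refine Amitsur.forward fun N _ _ hN => ?_
    obtain ⟨P⟩ := hE.2 N (Amitsur.isSplit_of_spl hN)
    exact Amitsur.place_spl P (Amitsur.spl_of_isSplit h)
  · rintro ⟨i, h⟩
    exact Amitsur.isSplit_of_spl (Amitsur.backward (Amitsur.spl_of_isSplit hE.1) h)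
end
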